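/- arXiv:0801.0233 — 2 statements merged into one kernel-verified Lean document; each statement's English description precedes it below -/
import Mathlib

section
/- Let r ≥ 1, let λ̄ = (λ^{(1)},…,λ^{(r)}) be a sequence of partitions in P_n, and let μ ∈ P_n. Then the coefficient c_λ̄^μ(y) in the Schur expansion s_λ̄(x|y) = Σ_{μ∈P_n} c_λ̄^μ(y) s_μ(x) equals Σ_{T ∈ LR_λ̄^μ} c_T(y), i.e. the sum over all barred skew tableaux T of shape λ̄ with Yamanouchi unbarred column word and unbarred content μ of the monomials Π_{a∈T barred} y^{(i(a))}_{a+c(a)−r(a)}. -/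
open Finset MvPolynomial

attribute [local instance] Classical.propDecidable

/-- A partition in `P_n`: a weakly decreasing sequence of naturals. -/
def IsPartition {n : ℕ} (lam : Fin n → ℕ) : Prop := Antitone lam

/-- The cells of the Young diagram of `lam`, as pairs (row, column), 0-based. -/
noncomputable def cells {n : ℕ} (lam : Fin n → ℕ) : Finset (Fin n × ℕ) :=
  (Finset.univ ×ˢ Finset.range (Finset.univ.sup lam)).filter fun c => c.2 < lam c.1

/-- Semistandardness for a filling with values in `Fin n` (0-based values):
rows weakly increase, columns strictly increase. -/
def IsSSYT {n : ℕ} (lam : Fin n → ℕ) (T : cells lam → Fin n) : Prop :=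
  (∀ c d : cells lam, (c : Fin n × ℕ).1 = (d : Fin n × ℕ).1 →
      (c : Fin n × ℕ).2 ≤ (d : Fin n × ℕ).2 → T c ≤ T d) ∧
  (∀ c d : cells lam, (c : Fin n × ℕ).2 = (d : Fin n × ℕ).2 →
      (c : Fin n × ℕ).1 < (d : Fin n × ℕ).1 → T c < T d)

/-- The y-subscript `a + c(a) - r(a)` of a cell (1-based value and coordinates). -/
def ysub {n : ℕ} (a : Fin n) (c : Fin n × ℕ) : ℤ := (a : ℤ) + 1 + (c.2 : ℤ) - ((c.1 : ℕ) : ℤ)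

/-- The Schur polynomial `s_lam(x)`, in the ring with `x`-variables `Sum.inl i`
and `y`-variables `Sum.inr (i, k)` (family `i`, subscript `k`). -/
noncomputable def schur (n r : ℕ) (lam : Fin n → ℕ) :
    MvPolynomial (Fin n ⊕ Fin r × ℤ) ℤ :=
  ∑ T ∈ Finset.univ.filter (IsSSYT lam), ∏ c : cells lam, X (Sum.inl (T c))

/-- The factorial Schur polynomial `s_lam(x | y^{(i)})`. -/
noncomputable def factSchur (n r : ℕ) (i : Fin r) (lam : Fin n → ℕ) :
    MvPolynomial (Fin n ⊕ Fin r × ℤ) ℤ :=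
  ∑ T ∈ Finset.univ.filter (IsSSYT lam),
    ∏ c : cells lam,
      (X (Sum.inl (T c)) + X (Sum.inr (i, ysub (T c) (c : Fin n × ℕ))))

/-- A barred filling of a single Young diagram: an entry is a value in `Fin n`
(0-based) together with a `Bool` recording whether it is barred.  Rows weakly
increase and columns strictly increase in value, disregarding bars. -/
def IsBarred {n : ℕ} (lam : Fin n → ℕ) (T : cells lam → Fin n × Bool) : Prop :=
  (∀ c d : cells lam, (c : Fin n × ℕ).1 = (d : Fin n × ℕ).1 →
      (c : Fin n × ℕ).2 ≤ (d : Fin n × ℕ).2 → (T c).1 ≤ (T d).1) ∧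
  (∀ c d : cells lam, (c : Fin n × ℕ).2 = (d : Fin n × ℕ).2 →
      (c : Fin n × ℕ).1 < (d : Fin n × ℕ).1 → (T c).1 < (T d).1)

/-- A barred skew tableau of shape `λ̄ = (lam 0, …, lam (r-1))`: since consecutive
diagrams are placed strictly below and to the left of the preceding one, no two
diagrams share a row or a column, so such a tableau is exactly a tuple of barred
fillings of the individual diagrams. -/
def IsBarredSkew {n r : ℕ} (lam : Fin r → Fin n → ℕ)
    (T : (i : Fin r) → cells (lam i) → Fin n × Bool) : Prop :=
  ∀ i, IsBarred (lam i) (T i)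

/-- Unbarred content of a barred filling of one diagram. -/
noncomputable def content1 {n : ℕ} (lam : Fin n → ℕ) (T : cells lam → Fin n × Bool)
    (k : Fin n) : ℕ :=
  (Finset.univ.filter fun c : cells lam => T c = (k, false)).card

/-- Unbarred content `ω(T)` of a barred skew tableau. -/
noncomputable def contentT {n r : ℕ} (lam : Fin r → Fin n → ℕ)
    (T : (i : Fin r) → cells (lam i) → Fin n × Bool) (k : Fin n) : ℕ :=
  ∑ i, content1 (lam i) (T i) k

/-- The monomial `c_T(y)` contributed by the barred entries of one diagram
(living in the ring of `y`-variables only). -/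
noncomputable def cT1 {n : ℕ} (r : ℕ) (i : Fin r) (lam : Fin n → ℕ)
    (T : cells lam → Fin n × Bool) : MvPolynomial (Fin r × ℤ) ℤ :=
  ∏ c ∈ Finset.univ.filter (fun c : cells lam => (T c).2 = true),
    X (i, ysub (T c).1 (c : Fin n × ℕ))

/-- The monomial `c_T(y)` of a barred skew tableau. -/
noncomputable def cT {n r : ℕ} (lam : Fin r → Fin n → ℕ)
    (T : (i : Fin r) → cells (lam i) → Fin n × Bool) : MvPolynomial (Fin r × ℤ) ℤ :=
  ∏ i, cT1 r i (lam i) (T i)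

/-- The unbarred column word of a barred filling of one diagram: unbarred values
(0-based) read down each column, from the rightmost column to the leftmost. -/
noncomputable def colWord1 {n : ℕ} (lam : Fin n → ℕ)
    (T : cells lam → Fin n × Bool) : List ℕ :=
  ((List.range (Finset.univ.sup lam)).reverse).flatMap fun j =>
    (List.finRange n).filterMap fun i =>
      if h : (i, j) ∈ cells lam then
        (if (T ⟨(i, j), h⟩).2 = false then some ((T ⟨(i, j), h⟩).1 : ℕ) else none)
      else none

/-- The unbarred column word of a barred skew tableau: diagram `lam 0` is the
rightmost, so its word comes first. -/
noncomputable def colWord {n r : ℕ} (lam : Fin r → Fin n → ℕ)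
    (T : (i : Fin r) → cells (lam i) → Fin n × Bool) : List ℕ :=
  (List.finRange r).flatMap fun i => colWord1 (lam i) (T i)

/-- A word (with 0-based values) is Yamanouchi if every initial segment contains
at least as many `k`'s as `(k+1)`'s, for every `k`. -/
def IsYam (w : List ℕ) : Prop :=
  ∀ t k, ((w.take t).count (k + 1)) ≤ (w.take t).count k

/-- The alternant `a_ξ(x) = det[(x_i)^{ξ_j}]`. -/
noncomputable def avand (n r : ℕ) (xi : Fin n → ℕ) :
    MvPolynomial (Fin n ⊕ Fin r × ℤ) ℤ :=
  Matrix.det (Matrix.of fun i j : Fin n =>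
    (X (Sum.inl i) : MvPolynomial (Fin n ⊕ Fin r × ℤ) ℤ) ^ xi j)

/-- `ρ = (n-1, n-2, …, 0)`. -/
def rhoPart (n : ℕ) : Fin n → ℕ := fun i => n - 1 - (i : ℕ)

section Alg
variable {R : Type*} [CommRing R]

lemma two_row_aux (x1 x2 : R) (y : ℕ → R) (l : ℕ) :
    (x1 - x2) * ∑ p ∈ range (l+1), (∏ j ∈ range p, (x1 + y j)) * ∏ j ∈ Ico p l, (x2 + y (j+1))
      = ∏ j ∈ range (l+1), (x1 + y j) - ∏ j ∈ range (l+1), (x2 + y j) := by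
  induction l with
  | zero => simp
  | succ l ih =>
    rw [sum_range_succ, Ico_self, prod_empty, mul_one, mul_add]
    have h : ∑ p ∈ range (l+1), (∏ j ∈ range p, (x1 + y j)) * ∏ j ∈ Ico p (l+1), (x2 + y (j+1))
        = (∑ p ∈ range (l+1), (∏ j ∈ range p, (x1 + y j)) * ∏ j ∈ Ico p l, (x2 + y (j+1)))
          * (x2 + y (l+1)) := by
      rw [sum_mul]
      refine sum_congr rfl fun p hp => ?_
      rw [prod_Ico_succ_top (by simp at hp; omega)]
      ring
    rw [h, ← mul_assoc, ih, prod_range_succ _ (l+1), prod_range_succ (fun j => x2 + y j) (l+1)]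
    ring

lemma two_row_symm (x1 x2 : R) (y : ℕ → R) (l : ℕ) :
    ∑ p ∈ range (l+1), (∏ j ∈ range p, (x1 + y j)) * ∏ j ∈ Ico p l, (x2 + y (j+1))
    = ∑ p ∈ range (l+1), (∏ j ∈ range p, (x2 + y j)) * ∏ j ∈ Ico p l, (x1 + y (j+1)) := by
  induction l with
  | zero => simp
  | succ l ih =>
    have h : ∀ x1 x2 : R, ∑ p ∈ range (l+1+1), (∏ j ∈ range p, (x1 + y j)) * ∏ j ∈ Ico p (l+1), (x2 + y (j+1))
        = (∑ p ∈ range (l+1), (∏ j ∈ range p, (x1 + y j)) * ∏ j ∈ Ico p l, (x2 + y (j+1)))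
          * (x2 + y (l+1)) + ∏ j ∈ range (l+1), (x1 + y j) := by
      intro x1 x2
      rw [sum_range_succ, Ico_self, prod_empty, mul_one, sum_mul]
      congr 1
      refine sum_congr rfl fun p hp => ?_
      rw [prod_Ico_succ_top (by simp at hp; omega)]
      ring
    rw [h, h, ← ih]
    have := two_row_aux x1 x2 y l
    linear_combination -this

lemma row_symm (x1 x2 : R) (y : ℕ → R) (L U : ℕ) (h : L ≤ U) :
    ∑ m ∈ Icc L U, (∏ j ∈ Ico L m, (x1 + y j)) * ∏ j ∈ Ico m U, (x2 + y (j+1))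
    = ∑ m ∈ Icc L U, (∏ j ∈ Ico L m, (x2 + y j)) * ∏ j ∈ Ico m U, (x1 + y (j+1)) := by
  have key : ∀ x1 x2 : R,
    ∑ m ∈ Icc L U, (∏ j ∈ Ico L m, (x1 + y j)) * ∏ j ∈ Ico m U, (x2 + y (j+1))
    = ∑ p ∈ range (U-L+1), (∏ j ∈ range p, (x1 + y (L+j))) *
        ∏ j ∈ Ico p (U-L), (x2 + y (L+(j+1))) := by
    intro x1 x2
    have e : Icc L U = Ico L (U+1) := by ext; simp
    rw [e, sum_Ico_eq_sum_range]
    refine sum_congr (by congr 1; omega) fun p hp => ?_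
    congr 1
    · rw [prod_Ico_eq_prod_range]; simp
    · rw [prod_Ico_eq_prod_range, prod_Ico_eq_prod_range]
      refine prod_congr (by congr 1; omega) fun q _ => ?_
      congr 2
      ring
  rw [key, key]
  exact two_row_symm x1 x2 (fun j => y (L + j)) (U-L)

/-- lower / upper bounds -/
def Lb (A B : ℕ → ℕ) (i : ℕ) : ℕ := max (A i) (B (i+1))
def Ub (A B : ℕ → ℕ) (i : ℕ) : ℕ := if i = 0 then B 0 else min (B i) (A (i-1))

def Grow (A B : ℕ → ℕ) (y : ℤ → R) (x1 x2 : R) (i m : ℕ) : R :=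
  (∏ j ∈ Ico (A i) m, (x1 + y ((j:ℤ) - i))) * ∏ j ∈ Ico m (B i), (x2 + y ((j:ℤ) - i + 1))

lemma alg_symm (n : ℕ) (A B : ℕ → ℕ) (hLU : ∀ i < n, Lb A B i ≤ Ub A B i) (hB : B n = 0)
    (y : ℤ → R) (x1 x2 : R) :
    ∏ i ∈ range n, ∑ m ∈ Icc (Lb A B i) (Ub A B i), Grow A B y x1 x2 i m
    = ∏ i ∈ range n, ∑ m ∈ Icc (Lb A B i) (Ub A B i), Grow A B y x2 x1 i m := by
  have key : ∀ x1 x2 : R,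
      ∏ i ∈ range n, ∑ m ∈ Icc (Lb A B i) (Ub A B i), Grow A B y x1 x2 i m
      = (∏ i ∈ range n, ∑ m ∈ Icc (Lb A B i) (Ub A B i),
          (∏ j ∈ Ico (Lb A B i) m, (x1 + y ((j:ℤ) - i))) *
            ∏ j ∈ Ico m (Ub A B i), (x2 + y (((j+1:ℕ):ℤ) - i))) *
        ((∏ i ∈ range n, ∏ j ∈ Ico (A i) (Lb A B i), (x1 + y ((j:ℤ) - i))) *
         (∏ i ∈ range n, ∏ j ∈ Ico (Ub A B i) (B i), (x2 + y ((j:ℤ) - i + 1)))) := by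
    intro x1 x2
    rw [← prod_mul_distrib, ← prod_mul_distrib]
    refine prod_congr rfl fun i hi => ?_
    rw [sum_mul]
    refine sum_congr rfl fun m hm => ?_
    rw [mem_Icc] at hm
    have hUB : Ub A B i ≤ B i := by unfold Ub; split_ifs with h <;> simp [h]
    have hAL : A i ≤ Lb A B i := le_max_left _ _
    rw [Grow, ← prod_Ico_consecutive _ hAL hm.1,
      ← prod_Ico_consecutive _ hm.2 hUB]
    have : ∀ j : ℕ, (((j+1:ℕ):ℤ) - i) = (j:ℤ) - i + 1 := by intro j; push_cast; ring
    simp only [this]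
    ring
  have P : ∀ x1 x2 : R, 
      (∏ i ∈ range n, ∏ j ∈ Ico (A i) (Lb A B i), (x1 + y ((j:ℤ) - i))) *
         (∏ i ∈ range n, ∏ j ∈ Ico (Ub A B i) (B i), (x2 + y ((j:ℤ) - i + 1)))
      = ∏ i ∈ range (n-1), ∏ j ∈ Ico (A i) (B (i+1)), ((x1 + y ((j:ℤ) - i)) * (x2 + y ((j:ℤ) - i))) := by
    intro x1 x2
    cases n with
    | zero => simp
    | succ n =>
      rw [prod_range_succ, prod_range_succ' (fun i => ∏ j ∈ Ico (Ub A B i) (B i), _)]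
      have h1 : Lb A B n = A n := by simp [Lb, hB]
      have h2 : Ub A B 0 = B 0 := by simp [Ub]
      rw [h1, h2]
      simp only [Ico_self, prod_empty, mul_one]
      rw [← prod_mul_distrib]
      refine prod_congr rfl fun i _ => ?_
      rw [prod_mul_distrib]
      congr 1
      · refine prod_congr ?_ fun _ _ => rfl
        ext; simp [Lb]; omega
      · refine prod_congr ?_ fun j _ => ?_
        · ext; simp [Ub]; omega
        · congr 2; push_cast; ring
  rw [key, key, P, P]
  congr 1
  · refine prod_congr rfl fun i hi => ?_
    exact row_symm x1 x2 (fun j => y ((j:ℤ) - i)) _ _ (hLU i (by simpa using hi))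
  · simp only [mul_comm]
end Alg


section Comb
variable {n : ℕ} {lam : Fin n → ℕ}

lemma mem_cells {c : Fin n × ℕ} : c ∈ cells lam ↔ c.2 < lam c.1 := by
  simp only [cells, mem_filter, mem_product, mem_univ, mem_range, true_and, and_iff_right_iff_imp]
  intro h
  exact lt_of_lt_of_le h (le_sup (f := lam) (mem_univ _))

lemma prod_cells {R : Type*} [CommMonoid R] (f : Fin n × ℕ → R) :
    ∏ c : cells lam, f c = ∏ i, ∏ c ∈ range (lam i), f (i, c) := by
  rw [Finset.prod_coe_sort (cells lam) f]
  exact Finset.prod_finset_product _ _ _ (by intro p; simp [mem_cells])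

/-- number of entries `< m` in row `i` -/
noncomputable def cnt (T : cells lam → Fin n) (m i : ℕ) : ℕ :=
  Finset.univ.sup fun c : cells lam =>
    if ((c : Fin n × ℕ).1 : ℕ) = i ∧ (T c : ℕ) < m then (c : Fin n × ℕ).2 + 1 else 0

lemma lt_cnt {T : cells lam → Fin n} (hT : IsSSYT lam T) (m : ℕ) (c : cells lam) :
    c.1.2 < cnt T m c.1.1 ↔ (T c : ℕ) < m := by
  constructor
  · intro h
    rw [cnt, Finset.lt_sup_iff] at h
    obtain ⟨d, -, hd⟩ := h
    split_ifs at hd with h2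
    · have := hT.1 c d (Fin.ext h2.1.symm) (by omega)
      have h3 : (T c : ℕ) ≤ T d := this
      omega
    · omega
  · intro h
    have := Finset.le_sup (f := fun d : cells lam =>
      if ((d : Fin n × ℕ).1 : ℕ) = c.1.1 ∧ (T d : ℕ) < m then (d : Fin n × ℕ).2 + 1 else 0)
      (mem_univ c)
    simp only [h, and_self, if_true] at this
    exact this

lemma cnt_le (T : cells lam → Fin n) (m : ℕ) (i : Fin n) : cnt T m i ≤ lam i := by
  refine Finset.sup_le fun c _ => ?_
  split_ifs with h
  · have := mem_cells.1 c.2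
    rw [Fin.ext h.1] at this
    exact this
  · exact Nat.zero_le _

lemma cnt_zero (T : cells lam → Fin n) (m i : ℕ) (h : n ≤ i) : cnt T m i = 0 := by
  rw [← Nat.le_zero]
  refine Finset.sup_le fun c _ => ?_
  rw [if_neg]
  intro h2
  have := c.1.1.2
  omega

lemma cnt_mono (T : cells lam → Fin n) (m m' i : ℕ) (h : m ≤ m') : cnt T m i ≤ cnt T m' i := by
  refine Finset.sup_mono_fun fun c _ => ?_
  split_ifs <;> omega

lemma cnt_col (hlam : IsPartition lam) {T : cells lam → Fin n} (hT : IsSSYT lam T) (m i : ℕ) :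
    cnt T (m+1) (i+1) ≤ cnt T m i := by
  by_cases hi : i + 1 < n
  · by_contra hc
    push Not at hc
    let i' : Fin n := ⟨i+1, hi⟩
    let i0 : Fin n := ⟨i, by omega⟩
    have h1 : cnt T m i < lam i' := lt_of_lt_of_le hc (cnt_le T (m+1) i')
    have h0 : cnt T m i < lam i0 := lt_of_lt_of_le h1 (hlam (Fin.mk_le_mk.2 (by omega)))
    let d : cells lam := ⟨(i', cnt T m i), mem_cells.2 h1⟩
    let c : cells lam := ⟨(i0, cnt T m i), mem_cells.2 h0⟩
    have hd := (lt_cnt hT (m+1) d).1 hc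
    have hcd : (T c : ℕ) < T d := hT.2 c d rfl (Fin.mk_lt_mk.2 (by omega))
    have := (lt_cnt hT m c).2 (by omega)
    exact lt_irrefl _ this
  · rw [cnt_zero T _ _ (by omega)]; exact Nat.zero_le _

def coll (k k1 v : Fin n) : Fin n := if v = k1 then k else v

/-- `T` lies in the fibre of `T0`: same columns `≥ j`, same after identifying `k`, `k1`. -/
def InFib (k k1 : Fin n) (j : ℕ) (T0 T : cells lam → Fin n) : Prop :=
  IsSSYT lam T ∧ (∀ c : cells lam, j ≤ c.1.2 → T c = T0 c) ∧
    ∀ c, coll k k1 (T c) = coll k k1 (T0 c)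

noncomputable def build (k k1 : Fin n) (j : ℕ) (T0 : cells lam → Fin n) (μ : Fin n → ℕ) :
    cells lam → Fin n := fun c =>
  if c.1.2 < j ∧ (T0 c = k ∨ T0 c = k1) then (if c.1.2 < μ c.1.1 then k else k1) else T0 c

/-- every `k` in column `j` has `k1` below. -/
def ColCond (k k1 : Fin n) (j : ℕ) (T0 : cells lam → Fin n) : Prop :=
  ∀ c : cells lam, c.1.2 = j → T0 c = k → ∃ d : cells lam, d.1.2 = j ∧ T0 d = k1 

noncomputable def cA (k : Fin n) (j : ℕ) (T0 : cells lam → Fin n) (i : ℕ) : ℕ := min j (cnt T0 k i)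
noncomputable def cB (k : Fin n) (j : ℕ) (T0 : cells lam → Fin n) (i : ℕ) : ℕ :=
  min j (cnt T0 (k+2) i)

lemma coll_iff {k k1 v w : Fin n} (hk : (k1:ℕ) = k + 1) :
    coll k k1 v = coll k k1 w ↔ v = w ∨ ((v = k ∨ v = k1) ∧ (w = k ∨ w = k1)) := by
  have : k ≠ k1 := by intro h; rw [h] at hk; omega
  unfold coll
  split_ifs <;> grind

lemma lt_cA {T0 : cells lam → Fin n} (hT : IsSSYT lam T0) (k : Fin n) (j : ℕ) (c : cells lam) :
    c.1.2 < cA k j T0 c.1.1 ↔ c.1.2 < j ∧ (T0 c : ℕ) < k := by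
  rw [cA, lt_min_iff, lt_cnt hT]

lemma lt_cB {T0 : cells lam → Fin n} (hT : IsSSYT lam T0) (k : Fin n) (j : ℕ) (c : cells lam) :
    c.1.2 < cB k j T0 c.1.1 ↔ c.1.2 < j ∧ (T0 c : ℕ) < k+2 := by
  rw [cB, lt_min_iff, lt_cnt hT]

lemma fib_cnt_le {k k1 : Fin n} (hk : (k1:ℕ) = k + 1) {j : ℕ} {T0 T : cells lam → Fin n}
    (h : InFib k k1 j T0 T) (i : ℕ) : cnt T k i = cnt T0 k i ∧ cnt T (k+2) i = cnt T0 (k+2) i := by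
  have key : ∀ c, ((T c : ℕ) < k ↔ (T0 c : ℕ) < k) ∧ ((T c : ℕ) < k+2 ↔ (T0 c : ℕ) < k+2) := by
    intro c
    rcases (coll_iff hk).1 (h.2.2 c) with h | ⟨h1, h2⟩
    · rw [h]; simp
    · rcases h1 with h1 | h1 <;> rcases h2 with h2 | h2 <;> rw [h1, h2] <;> omega
  unfold cnt
  simp only [(key _).1, (key _).2, and_self]

lemma fib_bounds (hlam : IsPartition lam) {k k1 : Fin n} (hk : (k1:ℕ) = k + 1) {j : ℕ}
    {T0 T : cells lam → Fin n} (h : InFib k k1 j T0 T) (i : ℕ) :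
    Lb (cA k j T0) (cB k j T0) i ≤ min j (cnt T (k+1) i) ∧
    min j (cnt T (k+1) i) ≤ Ub (cA k j T0) (cB k j T0) i := by
  have h1 := cnt_mono T k (k+1) i (by omega)
  have h2 := cnt_mono T (k+1) (k+2) i (by omega)
  have h3 : cnt T (k+2) (i+1) ≤ cnt T (k+1) i := cnt_col hlam h.1 (k+1) i
  have e1 := fib_cnt_le hk h i
  have e2 := fib_cnt_le hk h (i+1)
  unfold Lb Ub cA cB
  constructor
  · omega
  · split_ifs with hi
    · subst hi; omega
    · have h4 := cnt_col hlam h.1 k (i-1)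
      have e3 := fib_cnt_le hk h (i-1)
      rw [show i - 1 + 1 = i by omega] at h4
      omega

lemma fib_self {k k1 : Fin n} {j : ℕ} {T0 : cells lam → Fin n} (h : IsSSYT lam T0) :
    InFib k k1 j T0 T0 := ⟨h, fun _ _ => rfl, fun _ => rfl⟩

lemma coll_build {k k1 : Fin n} (hk : (k1:ℕ) = k + 1) {j : ℕ} {T0 : cells lam → Fin n}
    (μ : Fin n → ℕ) (c) : coll k k1 (build k k1 j T0 μ c) = coll k k1 (T0 c) := by
  rw [coll_iff hk]
  unfold build
  split_ifs with h1 h2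
  · right; exact ⟨Or.inl rfl, h1.2⟩
  · right; exact ⟨Or.inr rfl, h1.2⟩
  · left; rfl

lemma build_fib (hlam : IsPartition lam) {k k1 : Fin n} (hk : (k1:ℕ) = k + 1) {j : ℕ}
    {T0 : cells lam → Fin n} (hT : IsSSYT lam T0) (hc : ColCond k k1 j T0) (μ : Fin n → ℕ)
    (hμ : ∀ i : Fin n, Lb (cA k j T0) (cB k j T0) i ≤ μ i ∧ μ i ≤ Ub (cA k j T0) (cB k j T0) i) :
    InFib k k1 j T0 (build k k1 j T0 μ) := by
  refine ⟨⟨?_, ?_⟩, ?_, coll_build hk μ⟩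
  · intro c d hcd hle
    have h0 := hT.1 c d hcd hle
    rw [Fin.le_def] at h0
    by_cases hcj : c.1.2 < j ∧ (T0 c = k ∨ T0 c = k1)
    · by_cases hdj : d.1.2 < j ∧ (T0 d = k ∨ T0 d = k1)
      · unfold build
        rw [if_pos hcj, if_pos hdj, ← hcd]
        split_ifs
        · exact le_rfl
        · rw [Fin.le_def]; omega
        · omega
        · exact le_rfl
      · have e : build k k1 j T0 μ d = T0 d := by unfold build; rw [if_neg hdj]
        rw [e, build, if_pos hcj]
        have hkd : (k : ℕ) ≤ T0 d := by
          rcases hcj.2 with h | h <;> rw [h] at h0 <;> omega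
        split_ifs with h5
        · exact hkd
        · rw [Fin.le_def]
          by_contra hlt
          have hdk : T0 d = k := Fin.ext (by omega)
          have hjd : j ≤ d.1.2 := by
            by_contra hh
            exact hdj ⟨by omega, Or.inl hdk⟩
          -- cell (i, j)
          let e : cells lam := ⟨(c.1.1, j), mem_cells.2 (by
            have := mem_cells.1 d.2
            rw [← hcd] at this
            show j < lam c.1.1
            omega)⟩
          have h6 := hT.1 c e rfl (by show c.1.2 ≤ j; omega)
          have h7 := hT.1 e d hcd (by show j ≤ d.1.2; omega)
          have hck : (k:ℕ) ≤ T0 c := by rcases hcj.2 with h | h <;> rw [h]; omega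
          have hek : T0 e = k := by
            rw [Fin.le_def] at h6 h7
            apply Fin.ext
            rw [hdk] at h7
            omega
          obtain ⟨f, hf1, hf2⟩ := hc e rfl hek
          have hef : e.1.1 < f.1.1 := by
            by_contra hh
            rcases lt_or_eq_of_le (not_lt.1 hh) with h8 | h8
            · have := hT.2 f e hf1 h8
              rw [hf2, hek, Fin.lt_def] at this; omega
            · have : f = e := Subtype.ext (Prod.ext h8 hf1)
              rw [this, hek] at hf2
              rw [hf2] at hk; omega
          have hi1 : (c.1.1 : ℕ) + 1 ≤ f.1.1 := hef
          let g : cells lam := ⟨(⟨c.1.1 + 1, by omega⟩, j), mem_cells.2 (by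
            have h9 := mem_cells.1 f.2
            rw [hf1] at h9
            exact lt_of_lt_of_le h9 (hlam (Fin.le_def.2 hi1)))⟩
          have hg : (T0 g : ℕ) ≤ k1 := by
            rcases eq_or_lt_of_le hi1 with h8 | h8
            · have : g = f := Subtype.ext (Prod.ext (Fin.ext h8) hf1.symm)
              rw [this, hf2]
            · have := hT.2 g f hf1.symm h8
              rw [hf2, Fin.lt_def] at this; omega
          have h10 := (lt_cnt hT (k+2) g).2 (by omega)
          have h11 := (hμ c.1.1).1
          unfold Lb cB at h11
          simp only [g] at h10
          omega
    · have e : build k k1 j T0 μ c = T0 c := by unfold build; rw [if_neg hcj]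
      rw [e]
      by_cases hdj : d.1.2 < j ∧ (T0 d = k ∨ T0 d = k1)
      · have h1 : (T0 c : ℕ) < k := by
          have h2 : ¬ (T0 c = k ∨ T0 c = k1) := fun h => hcj ⟨by omega, h⟩
          rw [Fin.ext_iff, Fin.ext_iff] at h2
          rcases hdj.2 with h | h <;> rw [h] at h0 <;> omega
        rw [build, if_pos hdj, Fin.le_def]
        split_ifs <;> omega
      · have e : build k k1 j T0 μ d = T0 d := by unfold build; rw [if_neg hdj]
        rw [e]; exact h0
  · intro c d hcd hlt
    have h0 := hT.2 c d hcd hlt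
    rw [Fin.lt_def] at h0
    by_cases hcj : c.1.2 < j ∧ (T0 c = k ∨ T0 c = k1)
    · by_cases hdj : d.1.2 < j ∧ (T0 d = k ∨ T0 d = k1)
      · have hck : T0 c = k := by
          rcases hcj.2 with h | h
          · exact h
          · rcases hdj.2 with h' | h' <;> rw [h, h'] at h0 <;> omega
        have hdk : T0 d = k1 := by
          rcases hdj.2 with h' | h'
          · rw [hck, h'] at h0; omega
          · exact h'
        have hi1 : (c.1.1 : ℕ) + 1 = d.1.1 := by
          by_contra hh
          have hi2 : (c.1.1 : ℕ) + 1 < d.1.1 := lt_of_le_of_ne hlt hh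
          let g : cells lam := ⟨(⟨c.1.1 + 1, by omega⟩, d.1.2), mem_cells.2 (by
            have h9 := mem_cells.1 d.2
            exact lt_of_lt_of_le h9 (hlam (Fin.le_def.2 hi2.le)))⟩
          have a1 := hT.2 c g hcd (Fin.lt_def.2 (Nat.lt_succ_self _))
          have a2 := hT.2 g d rfl hi2
          rw [Fin.lt_def] at a1 a2
          rw [hck] at a1; rw [hdk] at a2; omega
        have b1 := (lt_cB hT k j d).2 ⟨hdj.1, by rw [hdk]; omega⟩
        have b2 : ¬ _ := mt (lt_cA hT k j c).1 (by rw [hck]; omega)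
        have b3 := (hμ c.1.1).1
        have b4 := (hμ d.1.1).2
        unfold Lb at b3
        unfold Ub at b4
        rw [if_neg (by omega)] at b4
        rw [← hi1] at b1 b4
        simp only [Nat.add_sub_cancel] at b4
        unfold build
        rw [if_pos hcj, if_pos hdj, if_pos (by omega), if_neg (by omega), Fin.lt_def]
        omega
      · have e : build k k1 j T0 μ d = T0 d := by unfold build; rw [if_neg hdj]
        have h2 : ¬ (T0 d = k ∨ T0 d = k1) := fun h => hdj ⟨by omega, h⟩
        rw [Fin.ext_iff, Fin.ext_iff] at h2
        rw [e, build, if_pos hcj, Fin.lt_def]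
        rcases hcj.2 with h | h <;> rw [h] at h0 <;> split_ifs <;> omega
    · have e : build k k1 j T0 μ c = T0 c := by unfold build; rw [if_neg hcj]
      rw [e]
      by_cases hdj : d.1.2 < j ∧ (T0 d = k ∨ T0 d = k1)
      · have h2 : ¬ (T0 c = k ∨ T0 c = k1) := fun h => hcj ⟨by omega, h⟩
        rw [Fin.ext_iff, Fin.ext_iff] at h2
        rw [build, if_pos hdj, Fin.lt_def]
        rcases hdj.2 with h | h <;> rw [h] at h0 <;> split_ifs <;> omega
      · have e : build k k1 j T0 μ d = T0 d := by unfold build; rw [if_neg hdj]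
        rw [e]; exact h0
  · intro c hjc
    rw [build, if_neg (by omega)]

lemma build_surj (k k1 : Fin n) (hk : (k1:ℕ) = k + 1) {j : ℕ}
    {T0 T : cells lam → Fin n} (h : InFib k k1 j T0 T) :
    build k k1 j T0 (fun i => min j (cnt T (k+1) i)) = T := by
  funext c
  have h2 := lt_cnt h.1 (k+1) c
  have h3 := (coll_iff hk).1 (h.2.2 c)
  unfold build
  by_cases hcj : c.1.2 < j ∧ (T0 c = k ∨ T0 c = k1)
  · have h4 : T c = k ∨ T c = k1 := by
      rcases h3 with h3 | h3
      · rw [h3]; exact hcj.2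
      · exact h3.1
    rw [if_pos hcj]
    rcases h4 with h4 | h4
    · rw [if_pos, h4]
      rw [h4] at h2
      have := h2.2 (by omega)
      exact lt_min hcj.1 this
    · rw [if_neg, h4]
      rw [h4] at h2
      have := mt h2.1 (by omega)
      exact fun hh => this (lt_of_lt_of_le hh (min_le_right _ _))
  · rw [if_neg hcj]
    rcases h3 with h3 | h3
    · exact h3.symm
    · exact (h.2.1 c (by by_contra hh; exact hcj ⟨by omega, h3.2⟩)).symm

lemma build_inj {k k1 : Fin n} (hk : (k1:ℕ) = k + 1) {j : ℕ}
    {T0 : cells lam → Fin n} (hT : IsSSYT lam T0) (μ μ' : Fin n → ℕ)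
    (hμ : ∀ i : Fin n, Lb (cA k j T0) (cB k j T0) i ≤ μ i ∧ μ i ≤ Ub (cA k j T0) (cB k j T0) i)
    (hμ' : ∀ i : Fin n, Lb (cA k j T0) (cB k j T0) i ≤ μ' i ∧ μ' i ≤ Ub (cA k j T0) (cB k j T0) i)
    (h : build k k1 j T0 μ = build k k1 j T0 μ') (i : Fin n) : ¬ μ i < μ' i := by
  intro hlt
  have a1 := (hμ i).1
  have a2 := (hμ' i).2
  have a3 : μ' i ≤ cB k j T0 i := by
    refine a2.trans ?_
    unfold Ub; split_ifs with h
    · rw [h]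
    · exact min_le_left _ _
  have a4 : cA k j T0 i ≤ μ i := (le_max_left _ _).trans a1
  let c : cells lam := ⟨(i, μ i), mem_cells.2 (by
    have := cnt_le T0 (k+2) i
    unfold cB at a3
    show μ i < lam i
    omega)⟩
  have b1 := (lt_cB hT k j c).1 (by show μ i < cB k j T0 i; omega)
  have b2 := mt (lt_cA hT k j c).2 (by show ¬ μ i < cA k j T0 i; omega)
  have b3 : T0 c = k ∨ T0 c = k1 := by
    rw [Fin.ext_iff, Fin.ext_iff]; omega
  have := congrFun h c
  have e1 : build k k1 j T0 μ c = k1 := by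
    unfold build
    rw [if_pos ⟨b1.1, b3⟩, if_neg (lt_irrefl (μ i))]
  have e2 : build k k1 j T0 μ' c = k := by
    unfold build
    rw [if_pos ⟨b1.1, b3⟩]
    exact if_pos hlt
  rw [e1, e2] at this
  rw [this] at hk; omega

end Comb

section Symm
variable {n : ℕ} {lam : Fin n → ℕ} {R : Type*} [CommRing R]

noncomputable def extT (k : Fin n) (T : cells lam → Fin n) (p : Fin n × ℕ) : Fin n :=
  if h : p ∈ cells lam then T ⟨p, h⟩ else k

lemma prod_Ico_ind (a b N : ℕ) (h : b ≤ N) (f : ℕ → R) :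
    ∏ c ∈ Ico a b, f c = ∏ c ∈ range N, if a ≤ c ∧ c < b then f c else 1 := by
  rw [← prod_filter]
  refine prod_congr ?_ fun _ _ => rfl
  ext c; simp; omega

noncomputable def K0 (k : Fin n) (j : ℕ) (T0 : cells lam → Fin n) (x : Fin n → R) (y : ℤ → R) : R :=
  ∏ i : Fin n, ∏ c ∈ range (lam i),
    if c < j ∧ ¬ (cA k j T0 i ≤ c ∧ c < cB k j T0 i) then
      x (extT k T0 (i, c)) + y (ysub (extT k T0 (i, c)) (i, c)) else 1

lemma mid_iff {k k1 : Fin n} (hk : (k1:ℕ) = k + 1) {j : ℕ} {T0 : cells lam → Fin n}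
    (hT : IsSSYT lam T0) (c : cells lam) (hj : c.1.2 < j) :
    (cA k j T0 c.1.1 ≤ c.1.2 ∧ c.1.2 < cB k j T0 c.1.1) ↔ (T0 c = k ∨ T0 c = k1) := by
  rw [← not_lt, lt_cA hT, lt_cB hT, Fin.ext_iff, Fin.ext_iff]
  omega

lemma Ub_le (A B : ℕ → ℕ) (i : ℕ) : Ub A B i ≤ B i := by
  unfold Ub; split_ifs with h <;> simp [h]

lemma weight_build {k k1 : Fin n} (hk : (k1:ℕ) = k + 1) {j : ℕ} {T0 : cells lam → Fin n}
    (hT : IsSSYT lam T0) (μ : Fin n → ℕ)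
    (hμ : ∀ i : Fin n, Lb (cA k j T0) (cB k j T0) i ≤ μ i ∧ μ i ≤ Ub (cA k j T0) (cB k j T0) i)
    (x : Fin n → R) (y : ℤ → R) :
    ∏ c ∈ univ.filter (fun c : cells lam => c.1.2 < j),
      (x (build k k1 j T0 μ c) + y (ysub (build k k1 j T0 μ c) c.1))
    = K0 k j T0 x y * ∏ i : Fin n, Grow (cA k j T0) (cB k j T0) (fun t => y (k + 1 + t))
        (x k) (x k1) i (μ i) := by
  have e : ∏ c ∈ univ.filter (fun c : cells lam => c.1.2 < j),
      (x (build k k1 j T0 μ c) + y (ysub (build k k1 j T0 μ c) c.1))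
      = ∏ c : cells lam, (fun p : Fin n × ℕ => if p.2 < j then
          x (extT k (build k k1 j T0 μ) p) + y (ysub (extT k (build k k1 j T0 μ) p) p) else 1) c := by
    rw [prod_filter]
    refine prod_congr rfl fun c _ => ?_
    simp only [extT, c.2, dif_pos]
  have e2 := prod_cells (lam := lam) (fun p : Fin n × ℕ => if p.2 < j then x (extT k (build k k1 j T0 μ) p) + y (ysub (extT k (build k k1 j T0 μ) p) p) else 1)
  refine (e.trans e2).trans ?_
  rw [K0, ← prod_mul_distrib]
  refine prod_congr rfl fun i _ => ?_
  have hA : cA k j T0 i ≤ μ i := (le_max_left _ _).trans (hμ i).1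
  have hB : μ i ≤ cB k j T0 i := (hμ i).2.trans (Ub_le _ _ _)
  have hBl : cB k j T0 i ≤ lam i := (min_le_right _ _).trans (cnt_le _ _ _)
  have hBj : cB k j T0 i ≤ j := (min_le_left _ _)
  rw [Grow, prod_Ico_ind _ _ _ (hB.trans hBl), prod_Ico_ind _ _ _ hBl, ← prod_mul_distrib,
    ← prod_mul_distrib]
  refine prod_congr rfl fun c hc => ?_
  have hcell : (i, c) ∈ cells lam := mem_cells.2 (by simpa using hc)
  have hmid := mid_iff hk (j := j) hT ⟨(i, c), hcell⟩
  simp only at hmid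
  simp only [extT, hcell, dif_pos, build]
  by_cases hcj : c < j
  · have hmid := hmid hcj
    by_cases hm : cA k j T0 i ≤ c ∧ c < cB k j T0 i
    · have hm' := hmid.1 hm
      simp only [hcj, hm, hm', and_self, true_and, and_true, if_true, not_true, if_false, one_mul]
      by_cases hcm : c < μ i
      · have : ¬ μ i ≤ c := by omega
        simp only [hcm, this, if_true, if_false, mul_one, ysub]
        congr 2; ring
      · have : μ i ≤ c := by omega
        simp only [hcm, this, if_true, if_false, one_mul, ysub, hk]
        congr 2; push_cast; ring
    · have hm' := mt hmid.2 hm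
      rw [if_pos hcj, if_neg (by tauto), if_pos ⟨hcj, hm⟩, if_neg (by omega), if_neg (by omega)]
      ring
  · rw [if_neg hcj, if_neg (by tauto), if_neg (by omega), if_neg (by omega)]
    ring

lemma K0_symm {k k1 : Fin n} (hk : (k1:ℕ) = k + 1) {j : ℕ} {T0 : cells lam → Fin n}
    (hT : IsSSYT lam T0) (x : Fin n → R) (y : ℤ → R) :
    K0 k j T0 (x ∘ Equiv.swap k k1) y = K0 k j T0 x y := by
  unfold K0
  refine prod_congr rfl fun i _ => prod_congr rfl fun c hc => ?_
  have hcell : (i, c) ∈ cells lam := mem_cells.2 (by simpa using hc)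
  split_ifs with h
  · have hm := mt (mid_iff hk (j := j) hT ⟨(i, c), hcell⟩ h.1).2 h.2
    push Not at hm
    simp only [extT, hcell, dif_pos, Function.comp]
    rw [Equiv.swap_apply_of_ne_of_ne hm.1 hm.2]
  · rfl

lemma fib_sum (hlam : IsPartition lam) {k k1 : Fin n} (hk : (k1:ℕ) = k + 1) {j : ℕ}
    {T0 : cells lam → Fin n} (hT : IsSSYT lam T0) (hc : ColCond k k1 j T0)
    (x : Fin n → R) (y : ℤ → R) :
    ∑ T ∈ univ.filter (InFib k k1 j T0), ∏ c ∈ univ.filter (fun c : cells lam => c.1.2 < j),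
      (x (T c) + y (ysub (T c) c.1))
    = K0 k j T0 x y * ∏ i ∈ range n, ∑ m ∈ Icc (Lb (cA k j T0) (cB k j T0) i)
        (Ub (cA k j T0) (cB k j T0) i),
        Grow (cA k j T0) (cB k j T0) (fun t => y (k + 1 + t)) (x k) (x k1) i m := by
  rw [Finset.prod_range (fun i => ∑ m ∈ Icc (Lb (cA k j T0) (cB k j T0) i)
        (Ub (cA k j T0) (cB k j T0) i),
        Grow (cA k j T0) (cB k j T0) (fun t => y (k + 1 + t)) (x k) (x k1) i m),
    Finset.prod_univ_sum, mul_sum]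
  symm
  refine Finset.sum_nbij (build k k1 j T0) ?_ ?_ ?_ ?_
  · intro μ hμ
    simp only [Fintype.mem_piFinset, mem_Icc] at hμ
    simp only [mem_filter, mem_univ, true_and]
    exact build_fib hlam hk hT hc μ hμ
  · intro μ hμ μ' hμ' h
    simp only [mem_coe, Fintype.mem_piFinset, mem_Icc] at hμ hμ'
    funext i
    exact le_antisymm (not_lt.1 (build_inj hk hT μ' μ hμ' hμ h.symm i))
      (not_lt.1 (build_inj hk hT μ μ' hμ hμ' h i))
  · intro T hTf
    simp only [mem_coe, mem_filter, mem_univ, true_and] at hTf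
    refine ⟨fun i => min j (cnt T (k+1) i), ?_, build_surj k k1 hk hTf⟩
    simp only [mem_coe, Fintype.mem_piFinset, mem_Icc]
    exact fun i => fib_bounds hlam hk hTf i
  · intro μ hμ
    simp only [Fintype.mem_piFinset, mem_Icc] at hμ
    exact (weight_build hk hT μ hμ x y).symm

theorem fib_symm (hlam : IsPartition lam) {k k1 : Fin n} (hk : (k1:ℕ) = k + 1) {j : ℕ}
    {T0 : cells lam → Fin n} (hT : IsSSYT lam T0) (hc : ColCond k k1 j T0)
    (x : Fin n → R) (y : ℤ → R) :
    ∑ T ∈ univ.filter (InFib k k1 j T0), ∏ c ∈ univ.filter (fun c : cells lam => c.1.2 < j),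
      (x (Equiv.swap k k1 (T c)) + y (ysub (T c) c.1))
    = ∑ T ∈ univ.filter (InFib k k1 j T0), ∏ c ∈ univ.filter (fun c : cells lam => c.1.2 < j),
      (x (T c) + y (ysub (T c) c.1)) := by
  have h1 := fib_sum hlam hk hT hc (x ∘ Equiv.swap k k1) y
  simp only [Function.comp_apply] at h1
  rw [h1, fib_sum hlam hk hT hc x y, ← K0_symm hk hT x y]
  congr 1
  rw [Equiv.swap_apply_left, Equiv.swap_apply_right]
  refine alg_symm n _ _ (fun i _ => ?_) ?_ _ _ _
  · have := fib_bounds hlam hk (fib_self (k := k) (k1 := k1) (j := j) hT) i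
    exact this.1.trans this.2
  · rw [cB, cnt_zero _ _ _ le_rfl]; simp

end Symm

section Poly
variable {n : ℕ} {K : Type*} [CommRing K]

/-- antisymmetrisation -/
noncomputable def Alt (p : MvPolynomial (Fin n) K) : MvPolynomial (Fin n) K :=
  ∑ σ : Equiv.Perm (Fin n), ((Equiv.Perm.sign σ : ℤˣ) : ℤ) • rename σ p

lemma Alt_sum {ι : Type*} (s : Finset ι) (f : ι → MvPolynomial (Fin n) K) :
    Alt (∑ i ∈ s, f i) = ∑ i ∈ s, Alt (f i) := by
  unfold Alt
  rw [sum_comm]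
  refine sum_congr rfl fun σ _ => ?_
  rw [map_sum, smul_sum]

lemma Alt_C_mul (a : K) (p : MvPolynomial (Fin n) K) : Alt (C a * p) = C a * Alt p := by
  unfold Alt
  rw [mul_sum]
  refine sum_congr rfl fun σ _ => ?_
  rw [map_mul, rename_C, mul_smul_comm]

lemma Alt_mul_symm (p f : MvPolynomial (Fin n) K)
    (hf : ∀ σ : Equiv.Perm (Fin n), rename σ f = f) : Alt p * f = Alt (p * f) := by
  unfold Alt
  rw [sum_mul]
  refine sum_congr rfl fun σ _ => ?_
  rw [map_mul, hf, smul_mul_assoc]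

lemma Alt_eq_zero {k k1 : Fin n} (hk : k ≠ k1) (p : MvPolynomial (Fin n) K)
    (h : rename (Equiv.swap k k1) p = p) : Alt p = 0 := by
  unfold Alt
  refine Finset.sum_involution (fun σ _ => σ * Equiv.swap k k1) ?_ ?_ ?_ ?_
  · intro σ _
    have : rename (σ * Equiv.swap k k1 : Equiv.Perm (Fin n)) p = rename σ p := by
      conv_rhs => rw [← h]
      rw [rename_rename]; rfl
    rw [this, Equiv.Perm.sign_mul, Equiv.Perm.sign_swap hk]
    simp
  · intro σ _ _ h2
    have := mul_eq_left.1 h2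
    rw [Equiv.swap_eq_one_iff] at this
    exact hk this
  · intro σ _; exact mem_univ _
  · intro σ _; simp [mul_assoc]

lemma sum_fiber_congr {ι κ M : Type*} [AddCommMonoid M] (s : Finset ι) (key : ι → κ)
    (f g : ι → M)
    (h : ∀ a ∈ s, ∀ F : Finset ι, (∀ b, b ∈ F ↔ b ∈ s ∧ key b = key a) →
      ∑ b ∈ F, f b = ∑ b ∈ F, g b) : ∑ a ∈ s, f a = ∑ a ∈ s, g a := by
  rw [← sum_fiberwise_of_maps_to (t := s.image key) (g := key) (fun a ha => mem_image_of_mem _ ha) f,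
    ← sum_fiberwise_of_maps_to (t := s.image key) (g := key) (fun a ha => mem_image_of_mem _ ha) g]
  refine sum_congr rfl fun b hb => ?_
  obtain ⟨a, ha, rfl⟩ := mem_image.1 hb
  exact h a ha _ (by simp)

variable {lam : Fin n → ℕ}

noncomputable def fs (lam : Fin n → ℕ) (y : ℤ → K) : MvPolynomial (Fin n) K :=
  ∑ T ∈ univ.filter (IsSSYT lam), ∏ c : cells lam, (X (T c) + C (y (ysub (T c) c.1)))

lemma col_lt (c : cells lam) : c.1.2 < univ.sup lam :=
  lt_of_lt_of_le (mem_cells.1 c.2) (le_sup (f := lam) (mem_univ _))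

lemma fs_swap (hlam : IsPartition lam) (y : ℤ → K) {k k1 : Fin n} (hk : (k1:ℕ) = k + 1) :
    rename (Equiv.swap k k1) (fs lam y) = fs lam y := by
  unfold fs
  rw [map_sum]
  simp only [map_prod, map_add, rename_X, rename_C]
  refine sum_fiber_congr _ (fun T c => coll k k1 (T c)) _ _ fun T0 hT0 F hF => ?_
  simp only [mem_filter, mem_univ, true_and] at hT0
  have e : F = univ.filter (InFib k k1 (univ.sup lam) T0) := by
    ext T
    rw [hF]
    simp only [mem_filter, mem_univ, true_and, InFib, funext_iff]
    refine and_congr_right fun _ => ⟨fun h => ⟨fun c hc => ?_, h⟩, fun h => h.2⟩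
    have := col_lt c; omega
  have e2 : univ.filter (fun c : cells lam => c.1.2 < univ.sup lam) = univ := by
    ext c; simpa using col_lt c
  have := fib_symm hlam hk hT0 (j := univ.sup lam) (fun c hc => by have := col_lt c; omega)
    (fun i => (X i : MvPolynomial (Fin n) K)) (fun t => C (y t))
  rw [e2] at this
  rw [e]
  exact this

lemma fs_symm (hlam : IsPartition lam) (y : ℤ → K) (σ : Equiv.Perm (Fin n)) :
    rename σ (fs lam y) = fs lam y := by
  obtain _ | m := n
  · have : σ = 1 := Subsingleton.elim _ _
    rw [this]; exact rename_id_apply _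
  · have hσ : σ ∈ Submonoid.closure
        (Set.range fun i : Fin m => Equiv.swap i.castSucc i.succ) := by
      rw [Equiv.Perm.mclosure_swap_castSucc_succ]; trivial
    induction hσ using Submonoid.closure_induction with
    | mem x hx =>
      obtain ⟨i, rfl⟩ := hx
      exact fs_swap hlam y (by simp)
    | one => exact rename_id_apply _
    | mul a b _ _ ha hb =>
      have : rename (a * b : Equiv.Perm (Fin (m+1))) (fs lam y) = rename a (rename b (fs lam y)) := by
        rw [rename_rename]; rfl
      rw [this, hb, ha]

lemma sum_bars {R : Type*} [CommRing R] (S : Finset (cells lam → Fin n)) (t : cells lam → Finset Bool)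
    (g : cells lam → Fin n → Bool → R) :
    ∑ T ∈ univ.filter (fun T : cells lam → Fin n × Bool =>
        (fun c => (T c).1) ∈ S ∧ ∀ c, (T c).2 ∈ t c), ∏ c, g c (T c).1 (T c).2
    = ∑ T ∈ S, ∏ c, ∑ b ∈ t c, g c (T c) b := by
  simp only [Finset.prod_univ_sum]
  rw [← Finset.sum_product']
  refine Finset.sum_nbij' (fun T => (fun c => (T c).1, fun c => (T c).2))
    (fun p c => (p.1 c, p.2 c)) ?_ ?_ ?_ ?_ ?_
  · intro T hT
    simpa [Fintype.mem_piFinset] using hT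
  · intro T hT
    simpa [Fintype.mem_piFinset] using hT
  · intro T _; rfl
  · intro T _; rfl
  · intro T _; rfl

/-- weight of a barred tableau -/
noncomputable def wfac (y : ℤ → K) (c : cells lam) (v : Fin n) (b : Bool) : MvPolynomial (Fin n) K :=
  if b = true then C (y (ysub v c.1)) else X v

noncomputable def wB (y : ℤ → K) (T : cells lam → Fin n × Bool) : MvPolynomial (Fin n) K :=
  ∏ c, wfac y c (T c).1 (T c).2

lemma sum_wfac (y : ℤ → K) (c : cells lam) (v : Fin n) :
    ∑ b : Bool, wfac y c v b = X v + C (y (ysub v c.1)) := by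
  simp [wfac, add_comm]

lemma isBarred_iff (T : cells lam → Fin n × Bool) :
    IsBarred lam T ↔ IsSSYT lam (fun c => (T c).1) := Iff.rfl

lemma fs_eq_sum (y : ℤ → K) : fs lam y = ∑ T ∈ univ.filter (IsBarred lam), wB y T := by
  have := sum_bars (lam := lam) (univ.filter (IsSSYT lam)) (fun _ => univ) (wfac y)
  simp only [mem_filter, mem_univ, true_and, implies_true, and_true, sum_wfac] at this
  exact this.symm

/-- content statistics -/
noncomputable def Nj (ν : ℕ → ℕ) (T : cells lam → Fin n × Bool) (j k : ℕ) : ℕ :=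
  ν k + (univ.filter fun c : cells lam => j ≤ c.1.2 ∧ (T c).2 = false ∧ ((T c).1 : ℕ) = k).card

def Good (ν : ℕ → ℕ) (T : cells lam → Fin n × Bool) : Prop :=
  ∀ j k, Nj ν T j (k+1) ≤ Nj ν T j k

def Crit (ν : ℕ → ℕ) (T : cells lam → Fin n × Bool) (p : ℕ × ℕ) : Prop :=
  Nj ν T p.1 p.2 < Nj ν T p.1 (p.2+1) ∧ (∀ j' > p.1, ∀ k', Nj ν T j' (k'+1) ≤ Nj ν T j' k') ∧
    ∀ k' < p.2, Nj ν T p.1 (k'+1) ≤ Nj ν T p.1 k'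

lemma Nj_top (ν : ℕ → ℕ) (T : cells lam → Fin n × Bool) (j k : ℕ) (hj : univ.sup lam ≤ j) :
    Nj ν T j k = ν k := by
  unfold Nj
  rw [Nat.add_eq_left, card_eq_zero, filter_eq_empty_iff]
  rintro c - ⟨h, -⟩
  have := col_lt c; omega

lemma exists_crit (ν : ℕ → ℕ) (hν : ∀ k, ν (k+1) ≤ ν k) (T : cells lam → Fin n × Bool)
    (h : ¬ Good ν T) : ∃ p, Crit ν T p := by
  unfold Good at h
  push Not at h
  obtain ⟨j0, hj0⟩ := h
  have hb : ∀ j, (∃ k, Nj ν T j k < Nj ν T j (k+1)) → j ≤ univ.sup lam := by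
    rintro j ⟨k, hk⟩
    by_contra hh
    rw [Nj_top _ _ _ _ (by omega), Nj_top _ _ _ _ (by omega)] at hk
    have := hν k; omega
  let P : ℕ → Prop := fun j => ∃ k, Nj ν T j k < Nj ν T j (k+1)
  have hP : P (Nat.findGreatest P (univ.sup lam)) :=
    Nat.findGreatest_spec (P := P) (hb j0 hj0) hj0
  refine ⟨(Nat.findGreatest P (univ.sup lam), Nat.find hP), Nat.find_spec hP, ?_, ?_⟩
  · intro j' hj' k'
    by_contra hh
    push Not at hh
    have hPj : P j' := ⟨k', hh⟩
    have := Nat.le_findGreatest (hb j' hPj) hPj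
    simp only at hj'
    omega
  · intro k' hk'
    exact not_lt.1 (Nat.find_min hP hk')

lemma crit_unique {ν : ℕ → ℕ} {T : cells lam → Fin n × Bool} {p q : ℕ × ℕ}
    (hp : Crit ν T p) (hq : Crit ν T q) : p = q := by
  obtain ⟨j, k⟩ := p
  obtain ⟨j', k'⟩ := q
  obtain ⟨p1, p2, p3⟩ := hp
  obtain ⟨q1, q2, q3⟩ := hq
  simp only at *
  rcases lt_trichotomy j j' with h | h | h
  · have := p2 _ h k'; omega
  · subst h
    rcases lt_trichotomy k k' with h | h | h
    · have := q3 _ h; omega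
    · rw [h]
    · have := p3 _ h; omega
  · have := q2 _ h k; omega

lemma Nj_congr {ν : ℕ → ℕ} {T T' : cells lam → Fin n × Bool} {j : ℕ}
    (h : ∀ c : cells lam, j ≤ c.1.2 → T c = T' c) (j' k : ℕ) (hj : j ≤ j') :
    Nj ν T j' k = Nj ν T' j' k := by
  unfold Nj
  congr 2
  ext c
  simp only [mem_filter, mem_univ, true_and]
  refine and_congr_right fun hc => ?_
  rw [h c (by omega)]

lemma crit_congr {ν : ℕ → ℕ} {T T' : cells lam → Fin n × Bool} {p : ℕ × ℕ}
    (h : ∀ c : cells lam, p.1 ≤ c.1.2 → T c = T' c) (hp : Crit ν T p) : Crit ν T' p := by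
  obtain ⟨p1, p2, p3⟩ := hp
  refine ⟨?_, fun j' hj' k' => ?_, fun k' hk' => ?_⟩
  · rw [← Nj_congr h _ _ le_rfl, ← Nj_congr h _ _ le_rfl]; exact p1
  · rw [← Nj_congr h _ _ hj'.le, ← Nj_congr h _ _ hj'.le]; exact p2 _ hj' _
  · rw [← Nj_congr h _ _ le_rfl, ← Nj_congr h _ _ le_rfl]; exact p3 _ hk'

lemma Nj_succ (ν : ℕ → ℕ) (T : cells lam → Fin n × Bool) (j k : ℕ) :
    Nj ν T j k = Nj ν T (j+1) k +
      (univ.filter fun c : cells lam => j = c.1.2 ∧ (T c).2 = false ∧ ((T c).1 : ℕ) = k).card := by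
  unfold Nj
  rw [add_assoc, ← card_union_of_disjoint]
  · congr 2
    ext c
    simp only [mem_filter, mem_univ, true_and, mem_union]
    constructor
    · rintro ⟨h1, h2⟩
      rcases eq_or_lt_of_le h1 with h | h
      · exact Or.inr ⟨h, h2⟩
      · exact Or.inl ⟨h, h2⟩
    · rintro (⟨h1, h2⟩ | ⟨h1, h2⟩)
      · exact ⟨by omega, h2⟩
      · exact ⟨by omega, h2⟩
  · rw [Finset.disjoint_filter]
    rintro c - ⟨h1, -⟩ ⟨h2, -⟩
    omega

lemma col_unique {T : cells lam → Fin n} (hT : IsSSYT lam T) (c d : cells lam)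
    (h : c.1.2 = d.1.2) (hv : T c = T d) : c = d := by
  rcases lt_trichotomy c.1.1 d.1.1 with h1 | h1 | h1
  · have := hT.2 c d h h1; rw [hv] at this; exact absurd this (lt_irrefl _)
  · exact Subtype.ext (Prod.ext h1 h)
  · have := hT.2 d c h.symm h1; rw [hv] at this; exact absurd this (lt_irrefl _)

lemma crit_facts {ν : ℕ → ℕ} {T : cells lam → Fin n × Bool}
    (hT : IsBarred lam T) {j k : ℕ} (hc : Crit ν T (j, k)) :
    k + 1 < n ∧ Nj ν T j (k+1) = Nj ν T j k + 1 ∧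
      ∃ d : cells lam, d.1.2 = j ∧ ((T d).1 : ℕ) = k + 1 := by
  obtain ⟨h1, h2, -⟩ := hc
  simp only at h1 h2
  have h3 := h2 (j+1) (Nat.lt_succ_self _) k
  have e1 := Nj_succ ν T j k
  have e2 := Nj_succ ν T j (k+1)
  have hle : (univ.filter fun c : cells lam =>
      j = c.1.2 ∧ (T c).2 = false ∧ ((T c).1 : ℕ) = k+1).card ≤ 1 := by
    rw [card_le_one]
    intro c hc d hd
    simp only [mem_filter, mem_univ, true_and] at hc hd
    exact col_unique hT c d (by omega) (Fin.ext (by omega))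
  have hpos : 0 < (univ.filter fun c : cells lam =>
      j = c.1.2 ∧ (T c).2 = false ∧ ((T c).1 : ℕ) = k+1).card := by omega
  obtain ⟨d, hd⟩ := card_pos.1 hpos
  simp only [mem_filter, mem_univ, true_and] at hd
  have := (T d).1.2
  exact ⟨by omega, by omega, d, hd.1.symm, hd.2.2⟩

end Poly

section Cancel
variable {n : ℕ} {K : Type*} [CommRing K] {lam : Fin n → ℕ}

noncomputable def keyf (k k1 : Fin n) (j : ℕ) (T : cells lam → Fin n × Bool) :
    cells lam → Fin n × Bool :=
  fun c => if j ≤ c.1.2 then T c else (coll k k1 (T c).1, false)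

noncomputable def mono0 (n : ℕ) (K : Type*) [CommRing K] (ν : ℕ → ℕ) : MvPolynomial (Fin n) K :=
  ∏ i : Fin n, X i ^ (ν i + rhoPart n i)

lemma prod_unbarred (y : ℤ → K) (ν : ℕ → ℕ) (j : ℕ) (T : cells lam → Fin n × Bool) :
    mono0 n K ν * ∏ c ∈ univ.filter (fun c : cells lam => j ≤ c.1.2), wfac y c (T c).1 (T c).2
    = C (∏ c ∈ univ.filter (fun c : cells lam => j ≤ c.1.2 ∧ (T c).2 = true),
        y (ysub (T c).1 c.1)) * mono0 n K (fun k => Nj ν T j k) := by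
  have e1 : ∏ c ∈ univ.filter (fun c : cells lam => j ≤ c.1.2), wfac y c (T c).1 (T c).2
      = (∏ c ∈ univ.filter (fun c : cells lam => j ≤ c.1.2 ∧ (T c).2 = true),
          C (y (ysub (T c).1 c.1))) *
        ∏ c ∈ univ.filter (fun c : cells lam => j ≤ c.1.2 ∧ (T c).2 = false),
          (X (T c).1 : MvPolynomial (Fin n) K) := by
    simp only [wfac]
    rw [prod_ite, filter_filter, filter_filter]
    simp only [Bool.not_eq_true]
  have e2 : ∏ c ∈ univ.filter (fun c : cells lam => j ≤ c.1.2 ∧ (T c).2 = false),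
          (X (T c).1 : MvPolynomial (Fin n) K)
      = ∏ i : Fin n, X i ^ (univ.filter fun c : cells lam =>
          j ≤ c.1.2 ∧ (T c).2 = false ∧ ((T c).1 : ℕ) = i).card := by
    rw [← prod_fiberwise_of_maps_to (t := univ) (g := fun c => (T c).1) (fun _ _ => mem_univ _)]
    refine prod_congr rfl fun i _ => ?_
    rw [prod_congr rfl (g := fun _ => (X i : MvPolynomial (Fin n) K)), prod_const]
    · congr 2
      ext c
      simp only [mem_filter, mem_univ, true_and, Fin.ext_iff, and_assoc]
    · intro c hc
      simp only [mem_filter] at hc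
      rw [hc.2]
  rw [e1, e2, map_prod]
  unfold mono0 Nj
  rw [mul_left_comm, ← prod_mul_distrib]
  congr 1
  refine prod_congr rfl fun i _ => ?_
  rw [← pow_add]
  congr 1
  ring

lemma mono0_swap (ν : ℕ → ℕ) {k k1 : Fin n} (hk : (k1:ℕ) = k + 1) (h : ν k1 = ν k + 1) :
    rename (Equiv.swap k k1) (mono0 n K ν) = mono0 n K ν := by
  unfold mono0
  rw [map_prod]
  simp only [map_pow, rename_X]
  refine Fintype.prod_equiv (Equiv.swap k k1) _ _ fun i => ?_
  congr 1
  have e : ν k1 + rhoPart n k1 = ν k + rhoPart n k := by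
    have := k1.2
    unfold rhoPart; omega
  by_cases h1 : i = k
  · rw [h1, Equiv.swap_apply_left, e]
  · by_cases h2 : i = k1
    · rw [h2, Equiv.swap_apply_right, e]
    · rw [Equiv.swap_apply_of_ne_of_ne h1 h2]

lemma fibre_sum (y : ℤ → K) {k k1 : Fin n} (hk : (k1:ℕ) = k + 1) (j : ℕ)
    (T0 : cells lam → Fin n × Bool) (F : Finset (cells lam → Fin n × Bool))
    (hF : ∀ T, T ∈ F ↔ IsBarred lam T ∧ keyf k k1 j T = keyf k k1 j T0) :
    ∑ T ∈ F, wB y T = (∏ c ∈ univ.filter (fun c : cells lam => j ≤ c.1.2),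
        wfac y c (T0 c).1 (T0 c).2) *
      ∑ T ∈ univ.filter (InFib k k1 j (fun c => (T0 c).1)),
        ∏ c ∈ univ.filter (fun c : cells lam => c.1.2 < j), (X (T c) + C (y (ysub (T c) c.1))) := by
  have hF2 : F = univ.filter (fun T : cells lam → Fin n × Bool =>
        (fun c => (T c).1) ∈ univ.filter (InFib k k1 j (fun c => (T0 c).1)) ∧
        ∀ c, (T c).2 ∈ (if j ≤ c.1.2 then {(T0 c).2} else univ : Finset Bool)) := by
    ext T
    rw [hF]
    simp only [mem_filter, mem_univ, true_and, InFib, isBarred_iff, keyf, funext_iff]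
    constructor
    · rintro ⟨h1, h2⟩
      refine ⟨⟨h1, fun c hc => ?_, fun c => ?_⟩, fun c => ?_⟩
      · have := h2 c
        rw [if_pos hc, if_pos hc] at this
        rw [this]
      · have := h2 c
        split_ifs at this
        · rw [this]
        · exact (Prod.ext_iff.1 this).1
      · have := h2 c
        split_ifs with hc
        · rw [if_pos hc, if_pos hc] at this
          rw [this]; simp
        · simp
    · rintro ⟨⟨h1, h2, h3⟩, h4⟩
      refine ⟨h1, fun c => ?_⟩
      have h4 := h4 c
      split_ifs with hc
      · rw [if_pos hc, mem_singleton] at h4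
        exact Prod.ext (h2 c hc) h4
      · rw [h3 c]
  rw [hF2]
  refine (sum_bars _ _ (wfac y)).trans ?_
  rw [mul_sum]
  refine sum_congr rfl fun T hT => ?_
  simp only [mem_filter, mem_univ, true_and] at hT
  rw [← prod_filter_mul_prod_filter_not univ (fun c : cells lam => j ≤ c.1.2)]
  congr 1
  · refine prod_congr rfl fun c hc => ?_
    simp only [mem_filter, mem_univ, true_and] at hc
    rw [if_pos hc, sum_singleton, hT.2.1 c hc]
  · refine prod_congr (by ext; simp) fun c hc => ?_
    simp only [mem_filter, mem_univ, true_and] at hc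
    rw [if_neg (by omega), sum_wfac]

lemma fibre_zero (hlam : IsPartition lam) (y : ℤ → K) (ν : ℕ → ℕ) {j k : ℕ}
    (T0 : cells lam → Fin n × Bool) (hT : IsBarred lam T0) (hc : Crit ν T0 (j, k))
    (k0 k1 : Fin n) (h0 : (k0 : ℕ) = k) (h1 : (k1 : ℕ) = k + 1)
    (F : Finset (cells lam → Fin n × Bool))
    (hF : ∀ T, T ∈ F ↔ IsBarred lam T ∧ keyf k0 k1 j T = keyf k0 k1 j T0) :
    ∑ T ∈ F, Alt (mono0 n K ν * wB y T) = 0 := by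
  obtain ⟨a1, a2, d, hd1, hd2⟩ := crit_facts hT hc
  have hk : (k1 : ℕ) = k0 + 1 := by omega
  rw [← Alt_sum, ← mul_sum]
  refine Alt_eq_zero (k := k0) (k1 := k1) (by intro h; rw [h] at hk; omega) _ ?_
  rw [fibre_sum y hk j T0 F hF, ← mul_assoc, prod_unbarred, map_mul, map_mul, rename_C,
    mono0_swap _ hk (by rw [h1, h0]; exact a2)]
  congr 1
  rw [map_sum]
  simp only [map_prod, map_add, rename_X, rename_C]
  exact fib_symm hlam hk (T0 := fun c => (T0 c).1) hT
    (fun _ _ _ => ⟨d, hd1, Fin.ext (by rw [hd2, h1])⟩)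
    (fun i => (X i : MvPolynomial (Fin n) K)) (fun t => C (y t))

theorem cancel (hlam : IsPartition lam) (y : ℤ → K) (ν : ℕ → ℕ) (hν : ∀ k, ν (k+1) ≤ ν k) :
    Alt (mono0 n K ν) * fs lam y
    = ∑ T ∈ univ.filter (fun T : cells lam → Fin n × Bool => IsBarred lam T ∧ Good ν T),
      Alt (mono0 n K ν * wB y T) := by
  rw [Alt_mul_symm _ _ (fs_symm hlam y), fs_eq_sum, mul_sum, Alt_sum,
    ← sum_filter_add_sum_filter_not (univ.filter (IsBarred lam)) (Good ν), filter_filter,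
    filter_filter, add_eq_left]
  have hcrit : ∀ T : cells lam → Fin n × Bool, ∃ p, ¬ Good ν T → Crit ν T p := by
    intro T
    by_cases h : Good ν T
    · exact ⟨(0,0), fun h' => absurd h h'⟩
    · obtain ⟨p, hp⟩ := exists_crit ν hν T h
      exact ⟨p, fun _ => hp⟩
  choose jk hjk using hcrit
  let key : (cells lam → Fin n × Bool) → (ℕ × ℕ) × (cells lam → Fin n × Bool) := fun T =>
    (jk T, if h : (jk T).2 + 1 < n then
      keyf ⟨(jk T).2, by omega⟩ ⟨(jk T).2 + 1, h⟩ (jk T).1 T else T)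
  refine (sum_fiber_congr _ key _ (fun _ => 0) fun T0 hT0 F hF => ?_).trans sum_const_zero
  rw [sum_const_zero]
  simp only [mem_filter, mem_univ, true_and] at hT0 hF
  have hc := hjk T0 hT0.2
  have hn := (crit_facts (j := (jk T0).1) (k := (jk T0).2) hT0.1 hc).1
  refine fibre_zero hlam y ν (j := (jk T0).1) (k := (jk T0).2) T0 hT0.1 hc
    ⟨(jk T0).2, by omega⟩ ⟨(jk T0).2 + 1, hn⟩ rfl rfl F fun T => ?_
  rw [hF]
  constructor
  · rintro ⟨⟨h1, h2⟩, h3⟩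
    refine ⟨h1, ?_⟩
    simp only [key, Prod.mk.injEq] at h3
    obtain ⟨h3, h4⟩ := h3
    simp only [h3, hn, dif_pos] at h4
    exact h4
  · rintro ⟨h1, h2⟩
    have hcol : ∀ c : cells lam, (jk T0).1 ≤ c.1.2 → T0 c = T c := by
      intro c hc
      have := congrFun h2 c
      unfold keyf at this
      rw [if_pos hc, if_pos hc] at this
      exact this.symm
    have hcT : Crit ν T (jk T0) := crit_congr hcol hc
    have hbad : ¬ Good ν T := fun hg => absurd (hg (jk T0).1 (jk T0).2) (not_le.2 hcT.1)
    refine ⟨⟨h1, hbad⟩, ?_⟩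
    have e : jk T = jk T0 := crit_unique (hjk T hbad) hcT
    simp only [key, Prod.mk.injEq, e, hn, dif_pos, true_and]
    exact h2

lemma mono0_mul_wB (y : ℤ → K) (ν : ℕ → ℕ) (T : cells lam → Fin n × Bool) :
    Alt (mono0 n K ν * wB y T)
    = C (∏ c ∈ univ.filter (fun c : cells lam => (T c).2 = true), y (ysub (T c).1 c.1)) *
      Alt (mono0 n K (fun k => Nj ν T 0 k)) := by
  have := prod_unbarred y ν 0 T
  simp only [Nat.zero_le, filter_true, true_and] at this
  rw [← Alt_C_mul, ← this]
  rfl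
end Cancel

section Words
variable {n : ℕ} {lam : Fin n → ℕ}

lemma isYam_iff (w : List ℕ) : IsYam w ↔ ∀ p, p <+: w → ∀ k, p.count (k+1) ≤ p.count k := by
  constructor
  · intro h p hp k
    have := h p.length k
    rwa [← List.prefix_iff_eq_take.1 hp] at this
  · intro h t k
    exact h _ (List.take_prefix _ _) k

lemma prefix_app {p w l : List ℕ} (h : p <+: w ++ l) :
    p <+: w ∨ ∃ q, q <+: l ∧ p = w ++ q := by
  obtain ⟨s, hs⟩ := h
  rcases List.append_eq_append_iff.1 hs with ⟨a, h1, h2⟩ | ⟨a, h1, h2⟩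
  · exact Or.inl ⟨a, h1.symm⟩
  · exact Or.inr ⟨a, ⟨s, h2.symm⟩, h1⟩

lemma isYam_left {w l : List ℕ} (h : IsYam (w ++ l)) : IsYam w := by
  rw [isYam_iff] at *
  exact fun p hp => h p (hp.trans (List.prefix_append _ _))

lemma isYam_count {w : List ℕ} (h : IsYam w) (k : ℕ) : w.count (k+1) ≤ w.count k :=
  (isYam_iff w).1 h w List.prefix_rfl k

lemma isYam_append_sorted (w l : List ℕ) (hl : l.Pairwise (· < ·)) :
    IsYam (w ++ l) ↔ IsYam w ∧ ∀ k, (w ++ l).count (k+1) ≤ (w ++ l).count k := by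
  constructor
  · intro h
    exact ⟨isYam_left h, isYam_count h⟩
  · rintro ⟨h1, h2⟩
    rw [isYam_iff]
    intro p hp k
    rcases prefix_app hp with hp | ⟨q, ⟨s, rfl⟩, rfl⟩
    · exact (isYam_iff w).1 h1 p hp k
    · have h2 := h2 k
      have h1 := isYam_count h1 k
      simp only [List.count_append] at h2 ⊢
      by_cases hk : k + 1 ∈ q
      · have : k ∉ s := by
          intro hs
          have := (List.pairwise_append.1 hl).2.2 _ hk _ hs
          omega
        rw [List.count_eq_zero.2 this] at h2
        omega
      · rw [List.count_eq_zero.2 hk]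
        omega

noncomputable def colL (T : cells lam → Fin n × Bool) (j : ℕ) : List ℕ :=
  (List.finRange n).filterMap fun i =>
      if h : (i, j) ∈ cells lam then
        (if (T ⟨(i, j), h⟩).2 = false then some ((T ⟨(i, j), h⟩).1 : ℕ) else none)
      else none

lemma colL_sorted {T : cells lam → Fin n × Bool} (hT : IsBarred lam T) (j : ℕ) :
    (colL T j).Pairwise (· < ·) := by
  unfold colL
  rw [List.pairwise_filterMap]
  refine (List.pairwise_lt_finRange n).imp ?_
  intro a b hab x hx z hz
  split_ifs at hx hz with h1 h2 h3 h4
  simp only [Option.some.injEq] at hx hz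
  have := hT.2 ⟨(a, j), h1⟩ ⟨(b, j), h3⟩ rfl hab
  rw [Fin.lt_def] at this
  omega

lemma mem_colL (T : cells lam → Fin n × Bool) (j k : ℕ) :
    k ∈ colL T j ↔ ∃ c : cells lam, j = c.1.2 ∧ (T c).2 = false ∧ ((T c).1 : ℕ) = k := by
  unfold colL
  rw [List.mem_filterMap]
  constructor
  · rintro ⟨i, -, h⟩
    split_ifs at h with h1 h2
    simp only [Option.some.injEq] at h
    exact ⟨⟨(i, j), h1⟩, rfl, h2, h⟩
  · rintro ⟨⟨⟨i, j'⟩, hc⟩, rfl, h2, h3⟩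
    refine ⟨i, List.mem_finRange _, ?_⟩
    rw [dif_pos hc, if_pos h2, h3]

lemma count_colL {T : cells lam → Fin n × Bool} (hT : IsBarred lam T) (j k : ℕ) :
    (colL T j).count k =
      (univ.filter fun c : cells lam => j = c.1.2 ∧ (T c).2 = false ∧ ((T c).1 : ℕ) = k).card := by
  by_cases h : k ∈ colL T j
  · have hnd : (colL T j).Nodup := (colL_sorted hT j).imp (fun h => ne_of_lt h)
    rw [List.count_eq_one_of_mem hnd h]
    obtain ⟨c, hc⟩ := (mem_colL T j k).1 h
    symm
    rw [card_eq_one]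
    refine ⟨c, ?_⟩
    ext d
    simp only [mem_filter, mem_univ, true_and, mem_singleton]
    constructor
    · intro hd
      exact col_unique hT d c (by omega) (Fin.ext (by omega))
    · rintro rfl; exact hc
  · rw [List.count_eq_zero.2 h]
    symm
    rw [card_eq_zero, filter_eq_empty_iff]
    intro c _ hc
    exact h ((mem_colL T j k).2 ⟨c, hc⟩)

lemma word_aux {T : cells lam → Fin n × Bool} (hT : IsBarred lam T) (w : List ℕ) (l : ℕ) :
    ∀ m, m + l = univ.sup lam →
    (∀ k, (w ++ ((List.range' m l).reverse.flatMap (colL T))).count k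
        = Nj (fun k => w.count k) T m k) ∧
    (IsYam (w ++ ((List.range' m l).reverse.flatMap (colL T))) ↔
      IsYam w ∧ ∀ j ≥ m, ∀ k, Nj (fun k => w.count k) T j (k+1) ≤ Nj (fun k => w.count k) T j k) := by
  induction l with
  | zero =>
    intro m hm
    constructor
    · intro k
      rw [Nj_top _ _ _ _ (by omega)]; simp
    · simp only [List.range'_zero, List.reverse_nil, List.flatMap_nil, List.append_nil]
      refine ⟨fun h => ⟨h, fun j hj k => ?_⟩, fun h => h.1⟩
      rw [Nj_top _ _ _ _ (by omega), Nj_top _ _ _ _ (by omega)]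
      exact isYam_count h k
  | succ l ih =>
    intro m hm
    obtain ⟨ih1, ih2⟩ := ih (m+1) (by omega)
    have e : w ++ ((List.range' m (l+1)).reverse.flatMap (colL T))
        = (w ++ ((List.range' (m+1) l).reverse.flatMap (colL T))) ++ colL T m := by
      rw [List.range'_succ, List.reverse_cons, List.flatMap_append]
      simp [List.append_assoc]
    have hcnt : ∀ k, (w ++ ((List.range' m (l+1)).reverse.flatMap (colL T))).count k
        = Nj (fun k => w.count k) T m k := by
      intro k
      rw [e, List.count_append, ih1, Nj_succ _ _ m k, count_colL hT]
    refine ⟨hcnt, ?_⟩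
    have h := isYam_append_sorted (w ++ ((List.range' (m+1) l).reverse.flatMap (colL T))) (colL T m)
      (colL_sorted hT m)
    rw [← e] at h
    simp only [hcnt] at h
    rw [h, ih2, and_assoc]
    refine and_congr_right fun _ => ?_
    constructor
    · rintro ⟨h1, h2⟩ j hj k
      rcases eq_or_lt_of_le hj with h3 | h3
      · rw [← h3]; exact h2 k
      · exact h1 j h3 k
    · intro h
      exact ⟨fun j hj k => h j (by omega) k, fun k => h m le_rfl k⟩

lemma colWord1_eq (T : cells lam → Fin n × Bool) :
    colWord1 lam T = (List.range' 0 (univ.sup lam)).reverse.flatMap (colL T) := by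
  rw [← List.range_eq_range']; rfl

lemma yam_iff_good {T : cells lam → Fin n × Bool} (hT : IsBarred lam T) (w : List ℕ) :
    IsYam (w ++ colWord1 lam T) ↔ IsYam w ∧ Good (fun k => w.count k) T := by
  rw [colWord1_eq, (word_aux hT w _ 0 (by simp)).2]
  simp [Good]

lemma count_colWord1 {T : cells lam → Fin n × Bool} (hT : IsBarred lam T) (w : List ℕ) (k : ℕ) :
    (w ++ colWord1 lam T).count k = Nj (fun k => w.count k) T 0 k := by
  rw [colWord1_eq, (word_aux hT w _ 0 (by simp)).1]

variable {K : Type*} [CommRing K]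

noncomputable def cc (y : ℤ → K) (T : cells lam → Fin n × Bool) : K :=
  ∏ c ∈ univ.filter (fun c : cells lam => (T c).2 = true), y (ysub (T c).1 c.1)

theorem cancel_word (hlam : IsPartition lam) (y : ℤ → K) (w : List ℕ) (hw : IsYam w) :
    Alt (mono0 n K (fun k => w.count k)) * fs lam y
    = ∑ T ∈ univ.filter (fun T : cells lam → Fin n × Bool =>
        IsBarred lam T ∧ IsYam (w ++ colWord1 lam T)),
      C (cc y T) * Alt (mono0 n K (fun k => (w ++ colWord1 lam T).count k)) := by
  rw [cancel hlam y _ (isYam_count hw)]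
  refine sum_congr ?_ fun T hT => ?_
  · ext T
    simp only [mem_filter, mem_univ, true_and]
    refine and_congr_right fun h => ?_
    rw [yam_iff_good h]; simp [hw]
  · simp only [mem_filter, mem_univ, true_and] at hT
    rw [mono0_mul_wB]
    simp only [count_colWord1 hT.1]
    rfl

theorem multi (r : ℕ) : ∀ (lam : Fin r → Fin n → ℕ) (_ : ∀ i, IsPartition (lam i))
    (y : Fin r → ℤ → K) (w : List ℕ) (_ : IsYam w),
    Alt (mono0 n K (fun k => w.count k)) * ∏ i, fs (lam i) (y i)
    = ∑ T ∈ univ.filter (fun T : (i : Fin r) → cells (lam i) → Fin n × Bool =>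
        IsBarredSkew lam T ∧ IsYam (w ++ colWord lam T)),
      C (∏ i, cc (y i) (T i)) * Alt (mono0 n K (fun k => (w ++ colWord lam T).count k)) := by
  induction r with
  | zero =>
    intro lam _ y w hw
    have : (univ.filter (fun T : (i : Fin 0) → cells (lam i) → Fin n × Bool =>
        IsBarredSkew lam T ∧ IsYam (w ++ colWord lam T))) = univ := by
      ext T; simp [IsBarredSkew, colWord, hw]
    rw [this]
    simp [colWord]
  | succ r ih =>
    intro lam hlam y w hw
    rw [Fin.prod_univ_succ, ← mul_assoc, cancel_word (hlam 0) (y 0) w hw, sum_mul]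
    have step : ∀ T ∈ univ.filter (fun T : cells (lam 0) → Fin n × Bool =>
        IsBarred (lam 0) T ∧ IsYam (w ++ colWord1 (lam 0) T)),
        C (cc (y 0) T) * Alt (mono0 n K (fun k => (w ++ colWord1 (lam 0) T).count k))
          * ∏ i : Fin r, fs (lam i.succ) (y i.succ)
        = ∑ T' ∈ univ.filter (fun T' : (i : Fin r) → cells (lam i.succ) → Fin n × Bool =>
            IsBarredSkew (fun i => lam i.succ) T' ∧
              IsYam ((w ++ colWord1 (lam 0) T) ++ colWord (fun i => lam i.succ) T')),
          C (cc (y 0) T) * (C (∏ i : Fin r, cc (y i.succ) (T' i)) * Alt (mono0 n K (fun k =>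
            ((w ++ colWord1 (lam 0) T) ++ colWord (fun i => lam i.succ) T').count k))) := by
      intro T hT
      simp only [mem_filter, mem_univ, true_and] at hT
      rw [mul_assoc, ih (fun i => lam i.succ) (fun i => hlam i.succ) (fun i => y i.succ) _ hT.2,
        mul_sum]
    rw [sum_congr rfl step, sum_sigma']
    have hword : ∀ T : (i : Fin (r+1)) → cells (lam i) → Fin n × Bool,
        colWord lam T = colWord1 (lam 0) (T 0) ++ colWord (fun i => lam i.succ) (fun i => T i.succ) := by
      intro T
      unfold colWord
      rw [List.finRange_succ, List.flatMap_cons, List.flatMap_map]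
    refine Finset.sum_nbij' (fun p => (Fin.cons p.1 p.2 :
        (i : Fin (r+1)) → cells (lam i) → Fin n × Bool))
      (fun T => ⟨T 0, fun i => T i.succ⟩) ?_ ?_ ?_ ?_ ?_
    · rintro ⟨T, T'⟩ h
      simp only [mem_sigma, mem_filter, mem_univ, true_and] at h ⊢
      refine ⟨fun i => ?_, ?_⟩
      · refine Fin.cases ?_ (fun i => ?_) i
        · exact h.1.1
        · exact h.2.1 i
      · rw [hword, ← List.append_assoc]; exact h.2.2
    · intro T h
      simp only [mem_sigma, mem_filter, mem_univ, true_and] at h ⊢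
      rw [hword, ← List.append_assoc] at h
      exact ⟨⟨h.1 0, isYam_left h.2⟩, fun i => h.1 i.succ, h.2⟩
    · rintro ⟨T, T'⟩ h; rfl
    · intro T h
      exact Fin.cons_self_tail T
    · rintro ⟨T, T'⟩ h
      rw [hword, ← List.append_assoc, Fin.prod_univ_succ, ← mul_assoc, ← C_mul]
      rfl

end Words

section SchurAlt
variable {n : ℕ} {lam : Fin n → ℕ} {K : Type*} [CommRing K]

lemma good_unique (hlam : IsPartition lam) {T : cells lam → Fin n × Bool} (hT : IsBarred lam T)
    (hG : Good (fun _ => 0) T) (hb : ∀ c, (T c).2 = false) :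
    ∀ a b : ℕ, ∀ c : cells lam, univ.sup lam - c.1.2 = a → (c.1.1 : ℕ) = b →
      ((T c).1 : ℕ) = c.1.1 := by
  intro a
  induction a using Nat.strong_induction_on with
  | _ a ih1 =>
  intro b
  induction b using Nat.strong_induction_on with
  | _ b ih2 =>
  intro c hca hcb
  have IH1 : ∀ d : cells lam, c.1.2 < d.1.2 → ((T d).1 : ℕ) = d.1.1 := by
    intro d hd
    have := col_lt d
    exact ih1 (univ.sup lam - d.1.2) (by omega) _ d rfl rfl
  have IH2 : ∀ d : cells lam, d.1.2 = c.1.2 → (d.1.1 : ℕ) < c.1.1 → ((T d).1 : ℕ) = d.1.1 := by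
    intro d hd hd2
    exact ih2 d.1.1 (by omega) d (by rw [hd, hca]) rfl
  have hlow : (c.1.1 : ℕ) ≤ (T c).1 := by
    rcases Nat.eq_zero_or_pos (c.1.1 : ℕ) with h | h
    · omega
    · have hlt := c.1.1.isLt
      let p : Fin n := ⟨c.1.1 - 1, by omega⟩
      have hp : p < c.1.1 := by rw [Fin.lt_def]; show (c.1.1:ℕ) - 1 < _; omega
      have hmem : (p, c.1.2) ∈ cells lam := by
        rw [mem_cells]
        have := mem_cells.1 c.2
        exact lt_of_lt_of_le this (hlam hp.le)
      have h1 := IH2 ⟨(p, c.1.2), hmem⟩ rfl hp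
      have h2 := hT.2 ⟨(p, c.1.2), hmem⟩ c rfl hp
      rw [Fin.lt_def, h1] at h2
      change (c.1.1:ℕ) - 1 < _ at h2
      omega
  by_contra hne
  obtain ⟨v, hv⟩ : ∃ v, ((T c).1 : ℕ) = v + 1 := ⟨(T c).1 - 1, by omega⟩
  have h1 := hG c.1.2 v
  simp only [Nj, zero_add] at h1
  have h2 : 0 < (univ.filter fun d : cells lam =>
      c.1.2 ≤ d.1.2 ∧ (T d).2 = false ∧ ((T d).1 : ℕ) = v + 1).card :=
    card_pos.2 ⟨c, by simp [hb, hv]⟩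
  have h3 : 0 < (univ.filter fun d : cells lam =>
      c.1.2 ≤ d.1.2 ∧ (T d).2 = false ∧ ((T d).1 : ℕ) = v).card := by omega
  obtain ⟨d, hd⟩ := card_pos.1 h3
  simp only [mem_filter, mem_univ, true_and] at hd
  obtain ⟨hd1, -, hd2⟩ := hd
  rcases eq_or_lt_of_le hd1 with h | h
  · rcases lt_trichotomy d.1.1 c.1.1 with h4 | h4 | h4
    · have := IH2 d h.symm h4
      rw [Fin.lt_def] at h4; omega
    · have : d = c := Subtype.ext (Prod.ext h4 h.symm)
      rw [this] at hd2; omega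
    · have := hT.2 c d h h4
      rw [Fin.lt_def] at this; omega
  · have e := IH1 d h
    have hmem : (c.1.1, d.1.2) ∈ cells lam := by
      rw [mem_cells]
      have := mem_cells.1 d.2
      refine lt_of_lt_of_le this (hlam ?_)
      rw [Fin.le_def]; show (c.1.1 : ℕ) ≤ d.1.1; omega
    have h5 := IH1 ⟨(c.1.1, d.1.2), hmem⟩ h
    have h6 := hT.1 c ⟨(c.1.1, d.1.2), hmem⟩ rfl h.le
    rw [Fin.le_def, h5] at h6
    change _ ≤ (c.1.1 : ℕ) at h6
    omega

def Tst (lam : Fin n → ℕ) : cells lam → Fin n × Bool := fun c => (c.1.1, false)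

def extp (lam : Fin n → ℕ) (k : ℕ) : ℕ := if h : k < n then lam ⟨k, h⟩ else 0

lemma Nj_Tst (j k : ℕ) : Nj (fun _ => 0) (Tst lam) j k = extp lam k - j := by
  unfold Nj extp
  rw [zero_add]
  split_ifs with h
  · rw [← Nat.card_Ico]
    refine card_nbij (fun c => c.1.2) ?_ ?_ ?_
    · intro c hc
      simp only [mem_filter, mem_univ, true_and, Tst, mem_coe, Finset.mem_Ico] at hc ⊢
      refine ⟨hc.1, ?_⟩
      have := mem_cells.1 c.2
      rwa [show c.1.1 = ⟨k, h⟩ from Fin.ext hc.2] at this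
    · intro c hc d hd hcd
      simp only [mem_filter, mem_univ, true_and, Tst, mem_coe] at hc hd hcd
      exact Subtype.ext (Prod.ext (Fin.ext (by omega)) hcd)
    · intro m hm
      simp only [mem_coe, Finset.mem_Ico] at hm
      refine ⟨⟨(⟨k, h⟩, m), mem_cells.2 hm.2⟩, ?_, rfl⟩
      simp [Tst, hm.1]
  · rw [Nat.zero_sub, card_eq_zero, filter_eq_empty_iff]
    intro c _ hc
    have := c.1.1.isLt
    simp only [Tst] at hc
    omega

lemma extp_anti (hlam : IsPartition lam) (k : ℕ) : extp lam (k+1) ≤ extp lam k := by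
  unfold extp
  split_ifs with h1 h2
  · exact hlam (by simp [Fin.le_def])
  · omega
  · omega
  · exact le_rfl

theorem schur_alt (hlam : IsPartition lam) :
    Alt (mono0 n K (fun _ => 0)) * fs lam (fun _ => 0) = Alt (mono0 n K (extp lam)) := by
  rw [cancel hlam _ _ (fun _ => le_rfl)]
  simp only [mono0_mul_wB]
  rw [Finset.sum_eq_single (Tst lam)]
  · have : (univ.filter fun c : cells lam => (Tst lam c).2 = true) = ∅ := by
      simp [Tst]
    rw [this, prod_empty, C_1, one_mul]
    congr 2
    funext k
    rw [Nj_Tst]; rfl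
  · intro T hT hne
    simp only [mem_filter, mem_univ, true_and] at hT
    by_cases hb : ∀ c, (T c).2 = false
    · exfalso
      apply hne
      funext c
      have := good_unique hlam hT.1 hT.2 hb _ _ c rfl rfl
      exact Prod.ext (Fin.ext this) (hb c)
    · push Not at hb
      obtain ⟨c, hc⟩ := hb
      rw [prod_eq_zero (i := c) (by simpa using hc) rfl, C_0, zero_mul]
  · intro h
    exfalso
    apply h
    simp only [mem_filter, mem_univ, true_and]
    refine ⟨⟨fun c d h _ => h.le, fun c d _ h => h⟩, fun j k => ?_⟩
    rw [Nj_Tst, Nj_Tst]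
    have := extp_anti hlam k
    omega

noncomputable def ee (μ : Fin n → ℕ) : Fin n →₀ ℕ :=
  Finsupp.equivFunOnFinite.symm (fun i => μ i + rhoPart n i)

lemma mono0_eq (ν : ℕ → ℕ) : mono0 n K ν = monomial (ee (fun i : Fin n => ν i)) 1 := by
  unfold mono0
  rw [monomial_eq, C_1, one_mul, Finsupp.prod_fintype _ _ (by simp)]
  rfl

lemma strict_rho (ν : Fin n → ℕ) (h : Antitone ν) :
    StrictAnti (fun i => ν i + rhoPart n i) := by
  intro i j hij
  have := h hij.le
  have h2 := j.isLt
  rw [Fin.lt_def] at hij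
  simp only [rhoPart]
  omega

lemma coeff_Alt (ν : ℕ → ℕ) (hν : ∀ k, ν (k+1) ≤ ν k) (μ : Fin n → ℕ) (hμ : IsPartition μ) :
    coeff (ee μ) (Alt (mono0 n K ν)) = if (fun i : Fin n => ν i) = μ then 1 else 0 := by
  have hν' : Antitone (fun i : Fin n => ν i) := fun i j h =>
    antitone_nat_of_succ_le hν (Fin.le_def.1 h)
  have key : ∀ σ : Equiv.Perm (Fin n),
      Finsupp.mapDomain σ (ee (fun i : Fin n => ν i)) = ee μ ↔
        σ = 1 ∧ (fun i : Fin n => ν i) = μ := by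
    intro σ
    have hs1 := strict_rho _ hν'
    have hs2 := strict_rho _ hμ
    constructor
    · intro h
      have h' : ∀ i : Fin n, ν i + rhoPart n i = μ (σ i) + rhoPart n (σ i) := by
        intro i
        have := DFunLike.congr_fun h (σ i)
        rw [Finsupp.mapDomain_apply σ.injective] at this
        exact this
      have hmono : StrictMono σ := by
        intro i j hij
        have := hs1 hij
        simp only [h'] at this
        exact (hs2.lt_iff_gt).1 this
      have h1 : (σ : Fin n → Fin n) = id :=
        (hmono.range_inj strictMono_id).1 (by simp)
      refine ⟨Equiv.ext fun i => congrFun h1 i, ?_⟩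
      funext i
      have := h' i
      rw [h1] at this
      simp only [id] at this
      omega
    · rintro ⟨rfl, h⟩
      rw [h]
      exact Finsupp.mapDomain_id
  unfold Alt
  rw [mono0_eq, coeff_sum]
  simp only [rename_monomial, coeff_smul, coeff_monomial, key]
  rw [Finset.sum_eq_single 1]
  · simp
  · intro σ _ h; simp [h]
  · simp

lemma count_colWord {r : ℕ} {lam : Fin r → Fin n → ℕ}
    {T : (i : Fin r) → cells (lam i) → Fin n × Bool} (hT : IsBarredSkew lam T) (k : Fin n) :
    (colWord lam T).count (k : ℕ) = contentT lam T k := by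
  unfold colWord contentT
  rw [List.count_flatMap, ← List.ofFn_eq_map, List.sum_ofFn]
  refine sum_congr rfl fun i _ => ?_
  have := count_colWord1 (hT i) [] (k : ℕ)
  rw [List.nil_append] at this
  simp only [Function.comp]
  rw [this]
  simp only [Nj, content1, List.count_nil, zero_add]
  congr 1
  ext c
  simp only [mem_filter, mem_univ, true_and, Prod.ext_iff, Fin.ext_iff, Nat.zero_le]
  exact and_comm

end SchurAlt

theorem factorial_LR_rule (n r : ℕ) (hn : 1 ≤ n) (hr : 1 ≤ r)
    (lam : Fin r → Fin n → ℕ) (hlam : ∀ i, IsPartition (lam i))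
    (c : (Fin n → ℕ) →₀ MvPolynomial (Fin r × ℤ) ℤ)
    (hsupp : ∀ μ, c μ ≠ 0 → IsPartition μ)
    (hexp : ∏ i, factSchur n r i (lam i)
      = c.sum fun μ p => rename Sum.inr p * schur n r μ)
    (μ : Fin n → ℕ) (hμ : IsPartition μ) :
    c μ = ∑ T ∈ Finset.univ.filter
        (fun T : (i : Fin r) → cells (lam i) → Fin n × Bool =>
          IsBarredSkew lam T ∧ IsYam (colWord lam T) ∧ contentT lam T = μ),
      cT lam T := by
  let Φ : MvPolynomial (Fin n ⊕ Fin r × ℤ) ℤ →ₐ[ℤ] MvPolynomial (Fin n) (MvPolynomial (Fin r × ℤ) ℤ) :=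
    aeval (Sum.elim X (fun t => C (X t)))
  have hl : ∀ i, Φ (X (Sum.inl i)) = X i := fun i => by simp [Φ]
  have hrr : ∀ i, Φ (X (Sum.inr i)) = C (X i) := fun i => by simp [Φ]
  have h1 : ∀ i lam, Φ (factSchur n r i lam) = fs lam (fun t => X (i, t)) := by
    intro i lam
    simp only [factSchur, fs, map_sum, map_prod, map_add, hl, hrr]
  have h2 : ∀ lam, Φ (schur n r lam) = fs lam (fun _ => 0) := by
    intro lam
    simp only [schur, fs, map_sum, map_prod, hl, C_0, add_zero]
  have h3 : ∀ p, Φ (rename Sum.inr p) = C p := by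
    intro p
    induction p using MvPolynomial.induction_on with
    | C a =>
      rw [rename_C]
      simp
    | add p q hp hq => rw [map_add, map_add, hp, hq, C_add]
    | mul_X p i hp => rw [map_mul, map_mul, hp, rename_X, hrr, C_mul]
  have H := congrArg (fun p => Alt (mono0 n (MvPolynomial (Fin r × ℤ) ℤ) (fun k => ([] : List ℕ).count k)) * Φ p) hexp
  simp only [map_prod, h1] at H
  have hnil : IsYam [] := fun t k => by simp
  rw [multi r lam hlam (fun i t => X (i, t)) [] hnil, Finsupp.sum, map_sum, mul_sum] at H
  simp only [map_mul, h2, h3, List.nil_append, List.count_nil] at H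
  have H2 := congrArg (coeff (ee μ)) H
  rw [coeff_sum, coeff_sum] at H2
  have R : ∀ ν ∈ c.support, coeff (ee μ) (Alt (mono0 n (MvPolynomial (Fin r × ℤ) ℤ) (fun _ => 0)) *
      (C (c ν) * fs ν (fun _ => 0))) = if ν = μ then c ν else 0 := by
    intro ν hν
    have hp := hsupp ν (Finsupp.mem_support_iff.1 hν)
    rw [mul_left_comm, schur_alt hp, coeff_C_mul, coeff_Alt _ (extp_anti hp) _ hμ]
    have : (fun i : Fin n => extp ν i) = ν := by
      funext i; simp [extp]
    rw [this]; simp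
  rw [sum_congr rfl R, Finset.sum_ite_eq'] at H2
  have e : (if μ ∈ c.support then c μ else 0) = c μ := by
    split_ifs with h
    · rfl
    · exact (Finsupp.notMem_support_iff.1 h).symm
  rw [e] at H2
  rw [← H2]
  have e2 : (univ.filter (fun T : (i : Fin r) → cells (lam i) → Fin n × Bool =>
          IsBarredSkew lam T ∧ IsYam (colWord lam T) ∧ contentT lam T = μ))
      = (univ.filter (fun T : (i : Fin r) → cells (lam i) → Fin n × Bool =>
          IsBarredSkew lam T ∧ IsYam (colWord lam T))).filter (fun T => contentT lam T = μ) := by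
    rw [filter_filter]; simp only [and_assoc]
  rw [e2, Finset.sum_filter (fun T => contentT lam T = μ)]
  refine sum_congr rfl fun T hT => ?_
  simp only [mem_filter, mem_univ, true_and] at hT
  rw [coeff_C_mul, coeff_Alt _ (isYam_count hT.2) _ hμ]
  have : (fun i : Fin n => (colWord lam T).count (i : ℕ)) = contentT lam T := by
    funext i; exact count_colWord hT.1 i
  rw [this, mul_ite, mul_one, mul_zero]
  rfl
end

section
/- Let r ≥ 1 and let λ̄ = (λ^{(1)},…,λ^{(r)}) be a sequence of partitions in P_n. Then Σ c_T(y) · a_{ρ+ω(T)}(x) = 0, where the sum is over all barred skew tableaux T ∈ B_λ̄ whose unbarred column word is not Yamanouchi. -/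
open Finset MvPolynomial

attribute [local instance] Classical.propDecidable

namespace BG

abbrev Rg (n r : ℕ) := MvPolynomial (Fin n ⊕ Fin r × ℤ) ℤ

def N {n : ℕ} (S : Finset (Fin n)) (m : ℕ) : ℕ := (S.filter (fun b => b.val < m)).card

def Compat {n : ℕ} (S S' : Finset (Fin n)) : Prop := ∀ m, N S m ≤ N S' m

noncomputable def xv {n r : ℕ} (a : Fin n) : Rg n r := X (Sum.inl a)

noncomputable def yv {n r : ℕ} (d : Fin r × ℕ) (S : Finset (Fin n)) (a : Fin n) : Rg n r :=
  X (Sum.inr (d.1, (a : ℤ) + 1 + (d.2 : ℤ) - (N S a.val : ℤ)))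

def Rel {n r : ℕ} (p d : Fin r × ℕ) (S S' : Finset (Fin n)) : Prop :=
  p.1 < d.1 ∨ (p.1 = d.1 ∧ Compat S S')

def Adj {r : ℕ} (p d : Fin r × ℕ) : Prop := p.1 < d.1 ∨ (p.1 = d.1 ∧ p.2 = d.2 + 1)

noncomputable def ok {n r : ℕ} (h : Fin r × ℕ → ℕ) (p : (Fin r × ℕ) × Finset (Fin n))
    (d : Fin r × ℕ) : Finset (Finset (Fin n)) :=
  univ.filter (fun S => S.card = h d ∧ Rel p.1 d p.2 S)

noncomputable def V {n r : ℕ} (h : Fin r × ℕ → ℕ) :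
    List (Fin r × ℕ) → (Fin r × ℕ) × Finset (Fin n) → Rg n r
  | [], _ => 1
  | d :: l, p => ∑ S ∈ ok h p d, (∏ a ∈ S, (xv a + yv d S a)) * V h l (d, S)

noncomputable def act {n r : ℕ} (σ : Equiv.Perm (Fin n)) : Rg n r →ₐ[ℤ] Rg n r :=
  rename (Sum.map σ id)

lemma act_xv {n r : ℕ} (σ : Equiv.Perm (Fin n)) (a : Fin n) :
    act σ (xv a : Rg n r) = xv (σ a) := by
  simp [act, xv]

lemma act_yv {n r : ℕ} (σ : Equiv.Perm (Fin n)) (d : Fin r × ℕ) (S : Finset (Fin n)) (a : Fin n) :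
    act σ (yv d S a : Rg n r) = yv d S a := by
  simp [act, yv]

lemma N_succ {n : ℕ} (S : Finset (Fin n)) (c : Fin n) :
    N S (c.val + 1) = N S c.val + if c ∈ S then 1 else 0 := by
  unfold N
  split_ifs with hc
  · have : S.filter (fun b => b.val < c.val + 1) = insert c (S.filter (fun b => b.val < c.val)) := by
      ext b
      simp only [mem_filter, mem_insert]
      constructor
      · rintro ⟨h1, h2⟩
        by_cases h : b = c
        · exact Or.inl h
        · right
          have : b.val ≠ c.val := fun h' => h (Fin.ext h')
          exact ⟨h1, by omega⟩
      · rintro (rfl | ⟨h1, h2⟩)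
        · exact ⟨hc, by omega⟩
        · exact ⟨h1, by omega⟩
    rw [this, card_insert_of_notMem (by simp)]
  · congr 1
    ext b
    simp only [mem_filter]
    constructor
    · rintro ⟨h1, h2⟩
      have : b.val ≠ c.val := fun h' => hc (Fin.ext h' ▸ h1)
      exact ⟨h1, by omega⟩
    · rintro ⟨h1, h2⟩
      exact ⟨h1, by omega⟩

def swS {n : ℕ} (a b : Fin n) (S : Finset (Fin n)) : Finset (Fin n) :=
  S.map (Equiv.swap a b).toEmbedding

lemma mem_swS {n : ℕ} (a b : Fin n) (S : Finset (Fin n)) (c : Fin n) :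
    c ∈ swS a b S ↔ Equiv.swap a b c ∈ S := by
  simp [swS, Finset.mem_map_equiv]

lemma swS_swS {n : ℕ} (a b : Fin n) (S : Finset (Fin n)) : swS a b (swS a b S) = S := by
  ext c; simp [mem_swS]

lemma card_swS {n : ℕ} (a b : Fin n) (S : Finset (Fin n)) : (swS a b S).card = S.card := by
  simp [swS]

lemma N_swS {n : ℕ} {a b : Fin n} (hab : b.val = a.val + 1) (S : Finset (Fin n)) (m : ℕ)
    (hm : m ≠ b.val) : N (swS a b S) m = N S m := by
  unfold N
  rw [← card_swS a b (S.filter _)]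
  congr 1
  ext c
  simp only [mem_filter, mem_swS]
  refine and_congr_right fun _ => ?_
  rw [Equiv.swap_apply_def]
  split_ifs with h1 h2
  · subst h1; omega
  · subst h2; omega
  · rfl

lemma N_swS_b {n : ℕ} {a b : Fin n} (hab : b.val = a.val + 1) (S : Finset (Fin n)) :
    N (swS a b S) b.val = N S a.val + if b ∈ S then 1 else 0 := by
  rw [hab, N_succ, N_swS hab _ _ (by omega)]
  simp [mem_swS]

lemma compat_swS {n : ℕ} {a b : Fin n} (hab : b.val = a.val + 1) (S S' : Finset (Fin n))
    (hS : a ∈ S → b ∈ S) (h : Compat S S') : Compat S (swS a b S') := by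
  intro m
  by_cases hm : m = b.val
  · subst hm
    rw [N_swS_b hab, hab, N_succ]
    have h1 := h a.val
    have h2 := h (b.val + 1)
    rw [N_succ, N_succ, hab, N_succ, N_succ] at h2
    have h3 := h b.val
    rw [hab, N_succ, N_succ] at h3
    split_ifs at * <;> simp_all <;> omega
  · rw [N_swS hab _ _ hm]; exact h m

lemma compat_swS_left {n : ℕ} {a b : Fin n} (hab : b.val = a.val + 1) (S S' : Finset (Fin n))
    (hb : b ∉ S) (h : Compat S S') : Compat (swS a b S) S' := by
  intro m
  by_cases hm : m = b.val
  · subst hm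
    rw [N_swS_b hab, hab, N_succ, if_neg hb]
    have := h a.val
    omega
  · rw [N_swS hab _ _ hm]; exact h m

lemma compat_diff {n : ℕ} {a b : Fin n} (hab : b.val = a.val + 1) (S S' : Finset (Fin n))
    (ha : a ∈ S) (h : Compat (swS a b S) S') (h' : ¬ Compat S S') :
    a ∉ S' ∧ b ∈ S' ∧ N S' a.val = N S a.val := by
  have h0 : ¬ N S b.val ≤ N S' b.val := by
    intro h0
    apply h'
    intro m
    by_cases hm : m = b.val
    · subst hm; exact h0
    · rw [← N_swS hab _ _ hm]; exact h m
  have h1 := h a.val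
  rw [N_swS hab _ _ (by omega)] at h1
  have h2 := h (b.val + 1)
  rw [N_swS hab _ _ (by omega), N_succ, N_succ, hab, N_succ, N_succ] at h2
  rw [hab, N_succ, N_succ] at h0
  split_ifs at * <;> simp_all <;> omega

/-- product over the elements distinct from a, b is invariant -/
lemma act_prod {n r : ℕ} (a b : Fin n) (d : Fin r × ℕ) (S S0 : Finset (Fin n))
    (ha : a ∉ S0) (hb : b ∉ S0) :
    act (Equiv.swap a b) (∏ c ∈ S0, (xv c + yv d S c) : Rg n r) = ∏ c ∈ S0, (xv c + yv d S c) := by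
  rw [map_prod]
  refine prod_congr rfl fun c hc => ?_
  rw [map_add, act_xv, act_yv, Equiv.swap_apply_of_ne_of_ne]
  · rintro rfl; exact ha hc
  · rintro rfl; exact hb hc

lemma act_prod_both {n r : ℕ} {a b : Fin n} (hab : b.val = a.val + 1) (d : Fin r × ℕ)
    (S : Finset (Fin n)) (ha : a ∈ S) (hb : b ∈ S) :
    act (Equiv.swap a b) (∏ c ∈ S, (xv c + yv d S c) : Rg n r) = ∏ c ∈ S, (xv c + yv d S c) := by
  have hne : a ≠ b := by intro h; rw [h] at hab; omega
  have hb' : b ∈ S.erase a := mem_erase.2 ⟨hne.symm, hb⟩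
  rw [← mul_prod_erase _ _ ha, ← mul_prod_erase _ _ hb', map_mul, map_mul,
    act_prod a b d S _ (by simp) (by simp)]
  simp only [map_add, act_xv, act_yv, Equiv.swap_apply_left, Equiv.swap_apply_right]
  have : (yv d S b : Rg n r) = yv d S a := by
    unfold yv
    congr 3
    rw [hab, N_succ, if_pos ha]
    push_cast
    ring
  rw [this]
  ring

theorem V_sym {n r : ℕ} (h : Fin r × ℕ → ℕ) {a b : Fin n} (hab : b.val = a.val + 1) :
    ∀ (l : List (Fin r × ℕ)) (p : (Fin r × ℕ) × Finset (Fin n)), List.IsChain Adj (p.1 :: l) →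
      ((a ∈ p.2 → b ∈ p.2) → act (Equiv.swap a b) (V h l p) = V h l p) ∧
      (a ∈ p.2 → b ∉ p.2 → ∃ D : Rg n r, act (Equiv.swap a b) D = D ∧
        V h l (p.1, swS a b p.2) - V h l p = (xv b + yv p.1 p.2 a) * D) := by
  have hne : a ≠ b := by intro h; rw [h] at hab; omega
  intro l
  induction l with
  | nil =>
    intro p _
    refine ⟨fun _ => by simp [V], fun _ _ => ⟨0, by simp, by simp [V]⟩⟩
  | cons d l ih =>
    intro p hp
    rw [List.isChain_cons_cons] at hp
    obtain ⟨hpd, hdl⟩ := hp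
    have ih1 := fun S => (ih (d, S) hdl).1
    have ih2 := fun S => (ih (d, S) hdl).2
    simp only at ih1 ih2
    constructor
    · intro hS
      set g : Finset (Fin n) → Rg n r := fun S => (∏ a ∈ S, (xv a + yv d S a)) * V h l (d, S)
        with hg
      have key1 : ∀ S, a ∈ S → b ∉ S →
          act (Equiv.swap a b) (g S + g (swS a b S)) = g S + g (swS a b S) := by
        intro S ha hb
        obtain ⟨D, hD, hV⟩ := ih2 S ha hb
        have hf := ih1 (swS a b S) (by intro _; rw [mem_swS]; simpa using ha)
        set Q : Rg n r := ∏ c ∈ S.erase a, (xv c + yv d S c) with hQ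
        have hQs : act (Equiv.swap a b) Q = Q :=
          act_prod a b d S _ (by simp) (by simp [hb])
        have e1 : g S = ((xv a + yv d S a) * Q) * V h l (d, S) := by
          simp only [hg, hQ]; rw [← mul_prod_erase _ _ ha]
        have hbs : b ∈ swS a b S := by rw [mem_swS]; simpa using ha
        have her : (swS a b S).erase b = S.erase a := by
          ext c
          simp only [mem_erase, mem_swS]
          by_cases h1 : c = a
          · subst h1; simp [hb]
          · by_cases h2 : c = b
            · subst h2; simp [hb]
            · rw [Equiv.swap_apply_of_ne_of_ne h1 h2]; simp [h1, h2]
        have e2 : g (swS a b S) = ((xv b + yv d (swS a b S) b) * Q) * V h l (d, swS a b S) := by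
          simp only [hg, hQ]; rw [← mul_prod_erase _ _ hbs, her]
          congr 2
          refine prod_congr rfl fun c hc => ?_
          congr 1
          unfold yv
          rw [N_swS hab]
          intro hcb
          rw [mem_erase] at hc
          exact hb (Fin.ext hcb ▸ hc.2)
        have e3 : V h l (d, S) = V h l (d, swS a b S) - (xv b + yv d S a) * D := by
          rw [← hV]; ring
        rw [e1, e2, e3]
        simp only [map_add, map_mul, map_sub, act_xv, act_yv, hQs, hD, hf,
          Equiv.swap_apply_left, Equiv.swap_apply_right]
        ring
      have key : ∀ S, act (Equiv.swap a b) (g S + g (swS a b S)) = g S + g (swS a b S) := by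
        intro S
        by_cases ha : a ∈ S <;> by_cases hb : b ∈ S
        · have : swS a b S = S := by
            ext c
            rw [mem_swS, Equiv.swap_apply_def]
            split_ifs with h1 h2
            · subst h1; simp [ha, hb]
            · subst h2; simp [ha, hb]
            · rfl
          rw [this]
          simp only [hg, map_add, map_mul, act_prod_both hab d S ha hb, ih1 S (fun _ => hb)]
        · exact key1 S ha hb
        · have := key1 (swS a b S) (by rw [mem_swS]; simpa using hb) (by rw [mem_swS]; simpa using ha)
          rw [swS_swS, add_comm] at this
          exact this
        · have : swS a b S = S := by
            ext c
            rw [mem_swS, Equiv.swap_apply_def]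
            split_ifs with h1 h2
            · subst h1; simp [ha, hb]
            · subst h2; simp [ha, hb]
            · rfl
          rw [this]
          simp only [hg, map_add, map_mul, act_prod a b d S S ha hb, ih1 S (fun h => absurd h ha)]
      have hok : ∀ S ∈ ok h p d, swS a b S ∈ ok h p d := by
        intro S hS'
        simp only [ok, mem_filter, mem_univ, true_and, card_swS] at hS' ⊢
        refine ⟨hS'.1, ?_⟩
        rcases hS'.2 with h1 | ⟨h1, h2⟩
        · exact Or.inl h1
        · exact Or.inr ⟨h1, compat_swS hab _ _ hS h2⟩
      have hsum : ∑ S ∈ ok h p d, g (swS a b S) = ∑ S ∈ ok h p d, g S :=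
        sum_nbij' (swS a b) (swS a b) hok hok (fun S _ => swS_swS a b S)
          (fun S _ => swS_swS a b S) (fun _ _ => rfl)
      have hV : V h (d :: l) p = ∑ S ∈ ok h p d, g S := rfl
      have h2 : (2 : Rg n r) * V h (d :: l) p = ∑ S ∈ ok h p d, (g S + g (swS a b S)) := by
        rw [sum_add_distrib, hsum, hV]; ring
      have h3 : (2 : Rg n r) * act (Equiv.swap a b) (V h (d :: l) p) = 2 * V h (d :: l) p := by
        have := congrArg (act (Equiv.swap a b)) h2
        rw [map_mul, map_sum, sum_congr rfl (fun S _ => key S), ← h2] at this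
        rwa [show act (Equiv.swap a b) (2 : Rg n r) = 2 from map_ofNat _ 2] at this
      exact mul_left_cancel₀ two_ne_zero h3
    · intro ha hb
      rcases hpd with hpd | ⟨hpd, hcol⟩
      · refine ⟨0, by simp, ?_⟩
        have : ok h (p.1, swS a b p.2) d = ok h p d := by
          ext S; simp [ok, Rel, hpd]
        simp only [V, this]
        simp
      · set E := (ok h (p.1, swS a b p.2) d) \ ok h p d with hE
        have hsub : ok h p d ⊆ ok h (p.1, swS a b p.2) d := by
          intro S hS
          simp only [ok, mem_filter, mem_univ, true_and] at hS ⊢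
          refine ⟨hS.1, ?_⟩
          rcases hS.2 with h1 | ⟨h1, h2⟩
          · exact Or.inl h1
          · exact Or.inr ⟨h1, compat_swS_left hab _ _ hb h2⟩
        have hmem : ∀ S ∈ E, a ∉ S ∧ b ∈ S ∧ N S a.val = N p.2 a.val := by
          intro S hS
          simp only [hE, mem_sdiff, ok, mem_filter, mem_univ, true_and, Rel, hpd, lt_irrefl,
            false_or] at hS
          exact compat_diff hab p.2 S ha hS.1.2 (fun h' => hS.2 ⟨hS.1.1, h'⟩)
        refine ⟨∑ S ∈ E, (∏ c ∈ S.erase b, (xv c + yv d S c)) * V h l (d, S), ?_, ?_⟩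
        · rw [map_sum]
          refine sum_congr rfl fun S hS => ?_
          obtain ⟨h1, h2, h3⟩ := hmem S hS
          rw [map_mul, ih1 S (fun h => absurd h h1), act_prod a b d S _ (by simp [h1]) (by simp)]
        · have : V h (d :: l) (p.1, swS a b p.2) - V h (d :: l) p =
              ∑ S ∈ E, (∏ a ∈ S, (xv a + yv d S a)) * V h l (d, S) := by
            simp only [V]
            rw [← sum_sdiff hsub]
            ring
          rw [this, mul_sum]
          refine sum_congr rfl fun S hS => ?_
          obtain ⟨h1, h2, h3⟩ := hmem S hS
          rw [← mul_prod_erase _ _ h2, mul_assoc]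
          congr 2
          unfold yv
          congr 3
          · exact hpd.symm
          · rw [hab, N_succ, if_neg h1, h3, hcol]
            push_cast
            ring

end BG

namespace BG

noncomputable def paths {n r : ℕ} (h : Fin r × ℕ → ℕ) :
    List (Fin r × ℕ) → (Fin r × ℕ) × Finset (Fin n) →
      Finset (List ((Fin r × ℕ) × Finset (Fin n) × Finset (Fin n)))
  | [], _ => {[]}
  | d :: l, p => (ok h p d).biUnion fun S => S.powerset.biUnion fun U =>
      (paths h l (d, S)).image (fun P => (d, S, U) :: P)

lemma sum_paths_cons {n r : ℕ} (h : Fin r × ℕ → ℕ) (d : Fin r × ℕ) (l : List (Fin r × ℕ))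
    (p : (Fin r × ℕ) × Finset (Fin n))
    (F : List ((Fin r × ℕ) × Finset (Fin n) × Finset (Fin n)) → Rg n r) :
    ∑ P ∈ paths h (d :: l) p, F P =
      ∑ S ∈ ok h p d, ∑ U ∈ S.powerset, ∑ P ∈ paths h l (d, S), F ((d, S, U) :: P) := by
  rw [paths, sum_biUnion]
  · refine sum_congr rfl fun S _ => ?_
    rw [sum_biUnion]
    · refine sum_congr rfl fun U _ => ?_
      rw [sum_image]
      intro P _ P' _ hPP
      simpa using hPP
    · intro U _ U' _ hne
      rw [Function.onFun, Finset.disjoint_left]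
      intro P hP hP'
      simp only [mem_image] at hP hP'
      obtain ⟨P1, _, rfl⟩ := hP
      obtain ⟨P2, _, h2⟩ := hP'
      simp at h2
      exact hne h2.1.symm
  · intro S _ S' _ hne
    rw [Function.onFun, Finset.disjoint_left]
    intro P hP hP'
    simp only [mem_image, mem_biUnion] at hP hP'
    obtain ⟨U1, _, P1, _, rfl⟩ := hP
    obtain ⟨U2, _, P2, _, h2⟩ := hP'
    simp at h2
    exact hne h2.1.1.symm

lemma mem_paths {n r : ℕ} (h : Fin r × ℕ → ℕ) (l : List (Fin r × ℕ)) :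
    ∀ (p : (Fin r × ℕ) × Finset (Fin n))
    (P : List ((Fin r × ℕ) × Finset (Fin n) × Finset (Fin n))),
    P ∈ paths h l p ↔ P.map Prod.fst = l ∧
      (∀ q ∈ P, q.2.1.card = h q.1 ∧ q.2.2 ⊆ q.2.1) ∧
      List.IsChain (fun q q' : (Fin r × ℕ) × Finset (Fin n) => Rel q.1 q'.1 q.2 q'.2)
        (p :: P.map (fun q => (q.1, q.2.1))) := by
  induction l with
  | nil =>
    intro p P
    simp only [paths, mem_singleton, List.map_eq_nil_iff]
    constructor
    · rintro rfl; simp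
    · exact fun h => h.1
  | cons d l ih =>
    intro p P
    simp only [paths, mem_biUnion, mem_image, ih, mem_powerset, ok, mem_filter, mem_univ, true_and]
    constructor
    · rintro ⟨S, ⟨hS1, hS2⟩, U, hU, P', ⟨h1, h2, h3⟩, rfl⟩
      refine ⟨by simp [h1], ?_, ?_⟩
      · intro q hq
        rcases List.mem_cons.1 hq with rfl | hq
        · exact ⟨hS1, hU⟩
        · exact h2 q hq
      · simp only [List.map_cons, List.isChain_cons_cons]
        exact ⟨hS2, h3⟩
    · rintro ⟨h1, h2, h3⟩
      rcases P with _ | ⟨⟨d', S, U⟩, P'⟩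
      · simp at h1
      · simp only [List.map_cons, List.cons.injEq] at h1
        obtain ⟨rfl, h1⟩ := h1
        simp only [List.map_cons, List.isChain_cons_cons] at h3
        have h0 := h2 _ List.mem_cons_self
        exact ⟨S, ⟨h0.1, h3.1⟩, U, h0.2, P',
          ⟨h1, fun q hq => h2 q (List.mem_cons_of_mem _ hq), h3.2⟩, rfl⟩

noncomputable def yw {n r : ℕ} (q : (Fin r × ℕ) × Finset (Fin n) × Finset (Fin n)) : Rg n r :=
  ∏ a ∈ q.2.1 \ q.2.2, yv q.1 q.2.1 a

noncomputable def wt {n r : ℕ} (q : (Fin r × ℕ) × Finset (Fin n) × Finset (Fin n)) : Rg n r :=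
  (∏ a ∈ q.2.2, xv a) * yw q

lemma sum_paths_wt {n r : ℕ} (h : Fin r × ℕ → ℕ) (l : List (Fin r × ℕ)) :
    ∀ (p : (Fin r × ℕ) × Finset (Fin n)),
    ∑ P ∈ paths h l p, (P.map wt).prod = V h l p := by
  induction l with
  | nil => intro p; simp [paths, V]
  | cons d l ih =>
    intro p
    rw [sum_paths_cons, V]
    refine sum_congr rfl fun S _ => ?_
    rw [prod_add, sum_mul]
    refine sum_congr rfl fun U _ => ?_
    rw [← ih, mul_sum]
    refine sum_congr rfl fun P _ => ?_
    simp [wt, yw]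

noncomputable def wd {n : ℕ} (U : Finset (Fin n)) : List (Fin n) :=
  (List.finRange n).filter (fun a => decide (a ∈ U))

lemma mem_wd {n : ℕ} (U : Finset (Fin n)) (a : Fin n) : a ∈ wd U ↔ a ∈ U := by
  simp [wd]

lemma sorted_wd {n : ℕ} (U : Finset (Fin n)) : (wd U).Pairwise (· < ·) := by
  unfold wd
  exact List.Pairwise.filter _ (List.pairwise_lt_finRange n)

lemma count_wd {n : ℕ} (U : Finset (Fin n)) (a : Fin n) :
    (wd U).count a = if a ∈ U then 1 else 0 := by
  have hnd : (wd U).Nodup := (sorted_wd U).imp (fun h => ne_of_lt h)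
  split_ifs with h
  · exact List.count_eq_one_of_mem hnd ((mem_wd U a).2 h)
  · exact List.count_eq_zero_of_not_mem (fun h' => h ((mem_wd U a).1 h'))

noncomputable def wordP {n r : ℕ} (P : List ((Fin r × ℕ) × Finset (Fin n) × Finset (Fin n))) :
    List (Fin n) := P.flatMap (fun q => wd q.2.2)

lemma IsYam_prefix (w1 w2 : List ℕ) (h : IsYam (w1 ++ w2)) : IsYam w1 := by
  intro t k
  have := h (min t w1.length) k
  rw [List.take_append_of_le_length (min_le_right _ _)] at this
  rcases le_total t w1.length with h' | h'
  · rwa [min_eq_left h'] at this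
  · rw [min_eq_right h', List.take_length] at this
    rwa [List.take_of_length_le h']

lemma bad_step {n : ℕ} (w : List (Fin n)) (U : Finset (Fin n)) (hw : IsYam (w.map Fin.val))
    (hb : ¬ IsYam ((w ++ wd U).map Fin.val)) :
    ∃ a b : Fin n, b.val = a.val + 1 ∧ a ∉ U ∧ b ∈ U ∧ w.count b = w.count a := by
  unfold IsYam at hb
  push Not at hb
  obtain ⟨t, k, hk⟩ := hb
  set w' := w.map Fin.val with hw'
  set u' := (wd U).map Fin.val with hu'
  have hs : u'.Pairwise (· < ·) := by
    rw [hu', List.pairwise_map]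
    exact (sorted_wd U).imp (fun h => h)
  rw [List.map_append, ← hw', ← hu', List.take_append, List.count_append, List.count_append] at hk
  set v := u'.take (t - w'.length) with hv
  have hnd : v.Nodup := (List.Pairwise.sublist (List.take_sublist _ _) hs).imp (fun h => ne_of_lt h)
  have h1 := hw t k
  have h2 : v.count (k+1) ≤ 1 := List.nodup_iff_count_le_one.1 hnd _
  have hmem : k + 1 ∈ v := by
    rw [← List.count_pos_iff]; omega
  have ht : w'.length < t := by
    by_contra hlt
    have : t - w'.length = 0 := by omega
    rw [hv, this] at hmem
    simp at hmem
  rw [List.take_of_length_le ht.le] at hk h1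
  have hmem' : k + 1 ∈ u' := List.mem_of_mem_take hmem
  rw [hu', List.mem_map] at hmem'
  obtain ⟨b, hbU, hbk⟩ := hmem'
  rw [mem_wd] at hbU
  have hkn : k < n := by have := b.2; omega
  refine ⟨⟨k, hkn⟩, b, hbk, ?_, hbU, ?_⟩
  · intro ha
    have hku : k ∈ u' := by
      rw [hu', List.mem_map]
      exact ⟨⟨k, hkn⟩, (mem_wd _ _).2 ha, rfl⟩
    have hkv : k ∉ v := by
      rw [← List.count_eq_zero]; omega
    rw [← List.take_append_drop (t - w'.length) u'] at hku hs
    rw [List.pairwise_append] at hs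
    rcases List.mem_append.1 hku with h | h
    · exact hkv h
    · have := hs.2.2 _ hmem _ h
      omega
  · have e : ∀ c : Fin n, w.count c = w'.count c.val := fun c => by
      rw [hw', List.count_map_of_injective _ _ Fin.val_injective]
    rw [e, e, hbk]
    simp only
    omega

noncomputable def mono {n r : ℕ} (w : List (Fin n)) : Rg n r :=
  ∏ a : Fin n, xv a ^ (rhoPart n a + w.count a)

lemma mono_append {n r : ℕ} (w : List (Fin n)) (U : Finset (Fin n)) :
    (mono (w ++ wd U) : Rg n r) = mono w * ∏ a ∈ U, xv a := by
  unfold mono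
  rw [← Finset.prod_filter_mul_prod_filter_not univ (fun a => a ∈ U) (fun a => xv a ^ (rhoPart n a + w.count a)),
   ← Finset.prod_filter_mul_prod_filter_not univ (fun a => a ∈ U)]
  have e1 : ∏ a ∈ univ.filter (fun a => a ∈ U), (xv a : Rg n r) ^ (rhoPart n a + (w ++ wd U).count a)
      = (∏ a ∈ univ.filter (fun a => a ∈ U), (xv a : Rg n r) ^ (rhoPart n a + w.count a)) * ∏ a ∈ U, xv a := by
    have : univ.filter (fun a => a ∈ U) = U := by ext; simp
    rw [this, ← prod_mul_distrib]
    refine prod_congr rfl fun a ha => ?_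
    rw [List.count_append, count_wd, if_pos ha, ← add_assoc, pow_succ]
  have e2 : ∏ a ∈ univ.filter (fun a => ¬ a ∈ U), (xv a : Rg n r) ^ (rhoPart n a + (w ++ wd U).count a)
      = (∏ a ∈ univ.filter (fun a => ¬ a ∈ U), (xv a : Rg n r) ^ (rhoPart n a + w.count a)) := by
    refine prod_congr rfl fun a ha => ?_
    rw [List.count_append, count_wd, if_neg (by simpa using ha), add_zero]
  rw [e1, e2]
  ring

lemma act_mono {n r : ℕ} (w : List (Fin n)) (a b : Fin n)
    (h : rhoPart n a + w.count a = rhoPart n b + w.count b) :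
    act (Equiv.swap a b) (mono w : Rg n r) = mono w := by
  unfold mono
  rw [map_prod]
  simp only [map_pow, act_xv]
  rw [← Equiv.prod_comp (Equiv.swap a b)]
  refine prod_congr rfl fun c _ => ?_
  rw [Equiv.swap_apply_self]
  congr 1
  rw [Equiv.swap_apply_def]
  split_ifs with h1 h2
  · subst h1; exact h.symm
  · subst h2; exact h
  · rfl

noncomputable def A {n r : ℕ} (p : Rg n r) : Rg n r :=
  ∑ σ : Equiv.Perm (Fin n), (Equiv.Perm.sign σ : ℤ) • act σ p

lemma A_sum {n r : ℕ} {ι : Type*} (s : Finset ι) (f : ι → Rg n r) :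
    A (∑ i ∈ s, f i) = ∑ i ∈ s, A (f i) := by
  unfold A
  rw [sum_comm]
  refine sum_congr rfl fun σ _ => ?_
  rw [map_sum, smul_sum]

lemma A_mul {n r : ℕ} (y q : Rg n r) (hy : ∀ σ : Equiv.Perm (Fin n), act σ y = y) :
    A (y * q) = y * A q := by
  unfold A
  rw [mul_sum]
  refine sum_congr rfl fun σ _ => ?_
  rw [map_mul, hy, mul_smul_comm]

lemma A_zero {n r : ℕ} (p : Rg n r) (a b : Fin n) (hab : a ≠ b)
    (hp : act (Equiv.swap a b) p = p) : A p = 0 := by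
  have h : A p = - A p := by
    conv_lhs => unfold A
    rw [← Equiv.sum_comp (Equiv.mulRight (Equiv.swap a b))]
    unfold A
    rw [← sum_neg_distrib]
    refine sum_congr rfl fun σ _ => ?_
    have : act (σ * Equiv.swap a b) p = act σ (act (Equiv.swap a b) p) := by
      unfold act
      rw [rename_rename]
      congr 2
      funext x
      rcases x with x | x <;> simp
    simp only [Equiv.coe_mulRight]
    rw [this, hp, Equiv.Perm.sign_mul, Equiv.Perm.sign_swap hab]
    simp
  have h2 : (2 : Rg n r) * A p = 0 := by
    rw [two_mul]
    nth_rewrite 1 [h]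
    ring
  exact (mul_eq_zero.1 h2).resolve_left two_ne_zero

lemma act_yw {n r : ℕ} (σ : Equiv.Perm (Fin n))
    (q : (Fin r × ℕ) × Finset (Fin n) × Finset (Fin n)) : act σ (yw q : Rg n r) = yw q := by
  unfold yw
  rw [map_prod]
  exact prod_congr rfl fun a _ => act_yv _ _ _ _

theorem bad_sum {n r : ℕ} (h : Fin r × ℕ → ℕ) (l : List (Fin r × ℕ)) :
    ∀ (p : (Fin r × ℕ) × Finset (Fin n)) (w : List (Fin n)),
    List.IsChain Adj (p.1 :: l) → IsYam (w.map Fin.val) →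
    A (∑ P ∈ paths h l p, if IsYam ((w ++ wordP P).map Fin.val) then (0 : Rg n r)
      else mono w * (P.map wt).prod) = 0 := by
  induction l with
  | nil =>
    intro p w _ hw
    simp [paths, wordP, hw, A]
  | cons d l ih =>
    intro p w hp hw
    rw [List.isChain_cons_cons] at hp
    rw [sum_paths_cons, A_sum]
    refine sum_eq_zero fun S hS => ?_
    rw [A_sum]
    refine sum_eq_zero fun U hU => ?_
    have hword : ∀ P, w ++ wordP ((d, S, U) :: P) = (w ++ wd U) ++ wordP P := by
      intro P; simp [wordP]
    by_cases hY : IsYam ((w ++ wd U).map Fin.val)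
    · have e : (∑ P ∈ paths h l (d, S), if IsYam ((w ++ wordP ((d, S, U) :: P)).map Fin.val)
            then (0 : Rg n r) else mono w * (((d, S, U) :: P).map wt).prod) =
          yw (d, S, U) * ∑ P ∈ paths h l (d, S), if IsYam (((w ++ wd U) ++ wordP P).map Fin.val)
            then (0 : Rg n r) else mono (w ++ wd U) * (P.map wt).prod := by
        rw [mul_sum]
        refine sum_congr rfl fun P _ => ?_
        rw [hword]
        split_ifs
        · simp
        · rw [mono_append, List.map_cons, List.prod_cons, wt]
          ring
      rw [e, A_mul _ _ (fun σ => act_yw σ _), ih (d, S) (w ++ wd U) hp.2 hY, mul_zero]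
    · obtain ⟨a, b, hab, ha, hb, hc⟩ := bad_step w U hw hY
      have e : (∑ P ∈ paths h l (d, S), if IsYam ((w ++ wordP ((d, S, U) :: P)).map Fin.val)
            then (0 : Rg n r) else mono w * (((d, S, U) :: P).map wt).prod) =
          yw (d, S, U) * (mono (w ++ wd U) * V h l (d, S)) := by
        rw [← sum_paths_wt, mul_sum, mul_sum]
        refine sum_congr rfl fun P _ => ?_
        rw [if_neg, mono_append, List.map_cons, List.prod_cons, wt]
        · ring
        · rw [hword, List.map_append]
          exact fun h' => hY (IsYam_prefix _ _ h')
      rw [e]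
      apply A_zero _ a b (by intro h; rw [h] at hab; omega)
      rw [map_mul, map_mul, act_yw, act_mono,
        (V_sym h hab l (d, S) hp.2).1 (fun _ => mem_powerset.1 hU hb)]
      rw [List.count_append, List.count_append, count_wd, count_wd, if_neg ha, if_pos hb, hc]
      unfold rhoPart
      have := b.2
      omega

end BG

namespace BG

lemma mem_cells {n : ℕ} (lam : Fin n → ℕ) (R : Fin n) (j : ℕ) :
    (R, j) ∈ cells lam ↔ j < lam R := by
  simp only [cells, mem_filter, mem_product, mem_univ, mem_range, true_and]
  constructor
  · exact fun h => h.2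
  · exact fun h => ⟨lt_of_lt_of_le h (Finset.le_sup (f := lam) (mem_univ R)), h⟩

noncomputable def rows {n r : ℕ} (lam : Fin r → Fin n → ℕ) (d : Fin r × ℕ) : Finset (Fin n) :=
  univ.filter (fun R => d.2 < lam d.1 R)

noncomputable def hgt {n r : ℕ} (lam : Fin r → Fin n → ℕ) (d : Fin r × ℕ) : ℕ := (rows lam d).card

lemma mem_rows_lt {n r : ℕ} (lam : Fin r → Fin n → ℕ) (hlam : ∀ i, IsPartition (lam i))
    (d : Fin r × ℕ) (R : Fin n) : R ∈ rows lam d ↔ R.val < hgt lam d := by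
  constructor
  · intro hR
    have : Finset.Iic R ⊆ rows lam d := by
      intro R' hR'
      simp only [rows, mem_filter, mem_univ, true_and, mem_Iic] at *
      exact lt_of_lt_of_le hR (hlam d.1 hR')
    have h2 := card_le_card this
    rw [Fin.card_Iic] at h2
    exact h2
  · intro hR
    by_contra hn
    have : rows lam d ⊆ Finset.Iio R := by
      intro R' hR'
      rw [mem_Iio]
      by_contra hle
      apply hn
      simp only [rows, mem_filter, mem_univ, true_and] at *
      exact lt_of_lt_of_le hR' (hlam d.1 (not_lt.1 hle))
    have h2 := card_le_card this
    rw [Fin.card_Iio] at h2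
    unfold hgt at hR
    omega

noncomputable def LL {n r : ℕ} (lam : Fin r → Fin n → ℕ) : List (Fin r × ℕ) :=
  (List.finRange r).flatMap fun i =>
    ((List.range (Finset.univ.sup (lam i))).reverse).map (fun j => (i, j))

lemma mem_LL {n r : ℕ} (lam : Fin r → Fin n → ℕ) (d : Fin r × ℕ) :
    d ∈ LL lam ↔ d.2 < Finset.univ.sup (lam d.1) := by
  obtain ⟨i, j⟩ := d
  simp [LL]

lemma mem_LL_of_rows {n r : ℕ} (lam : Fin r → Fin n → ℕ) (d : Fin r × ℕ) (R : Fin n)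
    (h : R ∈ rows lam d) : d ∈ LL lam := by
  rw [mem_LL]
  simp only [rows, mem_filter, mem_univ, true_and] at h
  exact lt_of_lt_of_le h (Finset.le_sup (f := lam d.1) (mem_univ R))

def Ord {r : ℕ} (d d' : Fin r × ℕ) : Prop := d.1 < d'.1 ∨ (d.1 = d'.1 ∧ d'.2 < d.2)

lemma pairwise_LL {n r : ℕ} (lam : Fin r → Fin n → ℕ) : (LL lam).Pairwise Ord := by
  unfold LL
  rw [List.pairwise_flatMap]
  constructor
  · intro i _
    rw [List.pairwise_map, List.pairwise_reverse]
    exact (List.pairwise_lt_range).imp (fun h => Or.inr ⟨rfl, h⟩)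
  · refine (List.pairwise_lt_finRange r).imp ?_
    intro i i' h x hx y hy
    simp only [List.mem_map] at hx hy
    obtain ⟨_, _, rfl⟩ := hx
    obtain ⟨_, _, rfl⟩ := hy
    exact Or.inl h

lemma nodup_LL {n r : ℕ} (lam : Fin r → Fin n → ℕ) : (LL lam).Nodup := by
  refine (pairwise_LL lam).imp ?_
  rintro d d' h rfl
  rcases h with h | h
  · exact lt_irrefl _ h
  · exact lt_irrefl _ h.2

lemma chain_block {r : ℕ} (i : Fin r) (rest : List (Fin r × ℕ))
    (hrest : ∀ p : Fin r × ℕ, p.1 ≤ i → List.IsChain Adj (p :: rest)) (m : ℕ) :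
    ∀ p : Fin r × ℕ, (p.1 < i ∨ p = (i, m)) →
      List.IsChain Adj (p :: (((List.range m).reverse).map (fun j => (i, j)) ++ rest)) := by
  induction m with
  | zero =>
    intro p hp
    simp only [List.range_zero, List.reverse_nil, List.map_nil, List.nil_append]
    apply hrest
    rcases hp with h | rfl
    · exact h.le
    · exact le_rfl
  | succ m ih =>
    intro p hp
    rw [List.range_succ, List.reverse_append, List.reverse_singleton, List.singleton_append,
      List.map_cons, List.cons_append, List.isChain_cons_cons]
    refine ⟨?_, ih _ (Or.inr rfl)⟩
    rcases hp with h | rfl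
    · exact Or.inl h
    · exact Or.inr ⟨rfl, rfl⟩

lemma chain_flat {r : ℕ} (m : Fin r → ℕ) (is : List (Fin r)) (his : is.Pairwise (· < ·)) :
    ∀ p : Fin r × ℕ, (∀ i ∈ is, p.1 < i ∨ p = (i, m i)) →
      List.IsChain Adj (p :: is.flatMap fun i => ((List.range (m i)).reverse).map (fun j => (i, j))) := by
  induction is with
  | nil => intro p _; simp
  | cons i is ih =>
    intro p hp
    rw [List.flatMap_cons]
    rw [List.pairwise_cons] at his
    refine chain_block i _ ?_ (m i) p (hp i List.mem_cons_self)
    intro p' hp'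
    exact ih his.2 p' (fun i' hi' => Or.inl (lt_of_le_of_lt hp' (his.1 i' hi')))

lemma chain_LL {n r : ℕ} (hr : 0 < r) (lam : Fin r → Fin n → ℕ) :
    List.IsChain Adj (((⟨0, hr⟩ : Fin r), Finset.univ.sup (lam ⟨0, hr⟩)) :: LL lam) := by
  refine chain_flat (fun i => Finset.univ.sup (lam i)) _ (List.pairwise_lt_finRange r) _ ?_
  intro i _
  by_cases h : i = ⟨0, hr⟩
  · right; subst h; rfl
  · left
    rw [Fin.lt_def]
    have : i.val ≠ 0 := fun h' => h (Fin.ext h')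
    simp only
    omega

noncomputable def ent {n r : ℕ} (lam : Fin r → Fin n → ℕ)
    (T : (i : Fin r) → cells (lam i) → Fin n × Bool) (d : Fin r × ℕ) (R : Fin n) : Fin n × Bool :=
  if h : (R, d.2) ∈ cells (lam d.1) then T d.1 ⟨(R, d.2), h⟩ else (R, false)

lemma ent_eq {n r : ℕ} (lam : Fin r → Fin n → ℕ)
    (T : (i : Fin r) → cells (lam i) → Fin n × Bool) (i : Fin r) (c : cells (lam i)) :
    T i c = ent lam T (i, c.1.2) c.1.1 := by
  unfold ent
  rw [dif_pos]

lemma row_mem {n r : ℕ} (lam : Fin r → Fin n → ℕ) (i : Fin r) (c : cells (lam i)) :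
    c.1.1 ∈ rows lam (i, c.1.2) := by
  simp only [rows, mem_filter, mem_univ, true_and]
  exact (mem_cells _ _ _).1 c.2

lemma barred_iff {n r : ℕ} (lam : Fin r → Fin n → ℕ)
    (T : (i : Fin r) → cells (lam i) → Fin n × Bool) :
    IsBarredSkew lam T ↔
      (∀ i j j' R, j ≤ j' → R ∈ rows lam (i, j) → R ∈ rows lam (i, j') →
        (ent lam T (i, j) R).1 ≤ (ent lam T (i, j') R).1) ∧
      (∀ d R R', R ∈ rows lam d → R' ∈ rows lam d → R < R' →
        (ent lam T d R).1 < (ent lam T d R').1) := by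
  constructor
  · intro h
    constructor
    · intro i j j' R hj h1 h2
      simp only [rows, mem_filter, mem_univ, true_and, ← mem_cells] at h1 h2
      unfold ent
      rw [dif_pos h1, dif_pos h2]
      exact (h i).1 ⟨(R, j), h1⟩ ⟨(R, j'), h2⟩ rfl hj
    · intro d R R' h1 h2 hR
      simp only [rows, mem_filter, mem_univ, true_and, ← mem_cells] at h1 h2
      unfold ent
      rw [dif_pos h1, dif_pos h2]
      exact (h d.1).2 ⟨(R, d.2), h1⟩ ⟨(R', d.2), h2⟩ rfl hR
  · rintro ⟨h1, h2⟩ i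
    constructor
    · intro c d hcd hle
      rw [ent_eq lam T, ent_eq lam T, hcd]
      refine h1 _ _ _ _ hle ?_ (row_mem lam i d)
      rw [← hcd]; exact row_mem lam i c
    · intro c d hcd hlt
      rw [ent_eq lam T, ent_eq lam T, hcd]
      refine h2 _ _ _ ?_ (row_mem lam i d) hlt
      rw [← hcd]; exact row_mem lam i c

noncomputable def colT {n r : ℕ} (lam : Fin r → Fin n → ℕ)
    (T : (i : Fin r) → cells (lam i) → Fin n × Bool) (d : Fin r × ℕ) :
    Finset (Fin n) × Finset (Fin n) :=
  ((rows lam d).image (fun R => (ent lam T d R).1),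
   ((rows lam d).filter (fun R => (ent lam T d R).2 = false)).image (fun R => (ent lam T d R).1))

lemma N_image {n : ℕ} (rw' : Finset (Fin n)) (f : Fin n → Fin n)
    (hf : Set.InjOn f rw') (m : ℕ) :
    N (rw'.image f) m = (rw'.filter (fun R => (f R).val < m)).card := by
  unfold N
  rw [Finset.filter_image, card_image_of_injOn]
  exact hf.mono (by intro x; simp; tauto)

section Bar
variable {n r : ℕ} {lam : Fin r → Fin n → ℕ} (hlam : ∀ i, IsPartition (lam i))
  {T : (i : Fin r) → cells (lam i) → Fin n × Bool} (hT : IsBarredSkew lam T)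

lemma ent_lt_iff (hT : IsBarredSkew lam T) (d : Fin r × ℕ) (R R' : Fin n)
    (h : R ∈ rows lam d) (h' : R' ∈ rows lam d) :
    (ent lam T d R).1 < (ent lam T d R').1 ↔ R < R' := by
  have := ((barred_iff lam T).1 hT).2
  constructor
  · intro hlt
    by_contra hn
    rcases eq_or_lt_of_le (not_lt.1 hn) with he | he
    · rw [he] at hlt; exact lt_irrefl _ hlt
    · exact lt_asymm hlt (this d _ _ h' h he)
  · exact this d _ _ h h'

lemma ent_inj (hT : IsBarredSkew lam T) (d : Fin r × ℕ) :
    Set.InjOn (fun R => (ent lam T d R).1) (rows lam d : Set (Fin n)) := by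
  intro R hR R' hR' he
  simp only at he
  rcases lt_trichotomy R R' with h | h | h
  · rw [← ent_lt_iff hT d R R' hR hR', he] at h; exact absurd h (lt_irrefl _)
  · exact h
  · rw [← ent_lt_iff hT d R' R hR' hR, he] at h; exact absurd h (lt_irrefl _)

lemma N_ent (hlam : ∀ i, IsPartition (lam i)) (hT : IsBarredSkew lam T) (d : Fin r × ℕ)
    (R : Fin n) (hR : R ∈ rows lam d) :
    N (colT lam T d).1 (ent lam T d R).1.val = R.val := by
  unfold colT
  simp only
  rw [N_image _ _ (ent_inj hT d), ← Fin.card_Iio R]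
  congr 1
  ext R'
  simp only [mem_filter, mem_Iio]
  constructor
  · rintro ⟨h1, h2⟩
    exact (ent_lt_iff hT d R' R h1 hR).1 h2
  · intro h
    have h1 : R' ∈ rows lam d := by
      rw [mem_rows_lt lam hlam] at *
      exact lt_trans h hR
    exact ⟨h1, (ent_lt_iff hT d R' R h1 hR).2 h⟩

lemma compat_colT (hlam : ∀ i, IsPartition (lam i)) (hT : IsBarredSkew lam T) (i : Fin r)
    (j j' : ℕ) (hj : j' ≤ j) :
    Compat (colT lam T (i, j)).1 (colT lam T (i, j')).1 := by
  intro m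
  unfold colT
  simp only
  rw [N_image _ _ (ent_inj hT _), N_image _ _ (ent_inj hT _)]
  apply card_le_card
  intro R hR
  rw [mem_filter] at hR ⊢
  have h1 : R ∈ rows lam (i, j') := by
    have := hR.1
    simp only [rows, mem_filter, mem_univ, true_and] at this ⊢
    omega
  refine ⟨h1, ?_⟩
  have := ((barred_iff lam T).1 hT).1 i j' j R hj h1 hR.1
  rw [Fin.le_def] at this
  omega

lemma unbarred_iff (hT : IsBarredSkew lam T) (d : Fin r × ℕ)
    (R : Fin n) (hR : R ∈ rows lam d) :
    (ent lam T d R).1 ∈ (colT lam T d).2 ↔ (ent lam T d R).2 = false := by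
  unfold colT
  simp only [mem_image, mem_filter]
  constructor
  · rintro ⟨R', ⟨h1, h2⟩, h3⟩
    rw [← ent_inj hT d h1 hR h3]; exact h2
  · intro h
    exact ⟨R, ⟨hR, h⟩, rfl⟩

noncomputable def PT {n r : ℕ} (lam : Fin r → Fin n → ℕ)
    (T : (i : Fin r) → cells (lam i) → Fin n × Bool) :
    List ((Fin r × ℕ) × Finset (Fin n) × Finset (Fin n)) :=
  (LL lam).map (fun d => (d, colT lam T d))

lemma Rel_trans {a b c : (Fin r × ℕ) × Finset (Fin n)} (h1 : Rel a.1 b.1 a.2 b.2)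
    (h2 : Rel b.1 c.1 b.2 c.2) : Rel a.1 c.1 a.2 c.2 := by
  rcases h1 with h1 | ⟨h1, h1'⟩ <;> rcases h2 with h2 | ⟨h2, h2'⟩
  · exact Or.inl (h1.trans h2)
  · exact Or.inl (h2 ▸ h1)
  · exact Or.inl (h1 ▸ h2)
  · exact Or.inr ⟨h1.trans h2, fun m => (h1' m).trans (h2' m)⟩

lemma chain_iff (p : (Fin r × ℕ) × Finset (Fin n)) (l : List ((Fin r × ℕ) × Finset (Fin n))) :
    List.IsChain (fun q q' : (Fin r × ℕ) × Finset (Fin n) => Rel q.1 q'.1 q.2 q'.2) (p :: l) ↔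
    (∀ q ∈ l, Rel p.1 q.1 p.2 q.2) ∧
      l.Pairwise (fun q q' : (Fin r × ℕ) × Finset (Fin n) => Rel q.1 q'.1 q.2 q'.2) := by
  haveI : IsTrans ((Fin r × ℕ) × Finset (Fin n)) (fun q q' => Rel q.1 q'.1 q.2 q'.2) :=
    ⟨fun _ _ _ h1 h2 => Rel_trans h1 h2⟩
  rw [List.isChain_iff_pairwise, List.pairwise_cons]

lemma PT_mem (hlam : ∀ i, IsPartition (lam i)) (hT : IsBarredSkew lam T) (hr : 0 < r) (m : ℕ) :
    PT lam T ∈ paths (hgt lam) (LL lam) (((⟨0, hr⟩ : Fin r), m), ∅) := by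
  rw [mem_paths]
  refine ⟨by simp [PT, Function.comp_def], ?_, ?_⟩
  · intro q hq
    simp only [PT, List.mem_map] at hq
    obtain ⟨d, hd, rfl⟩ := hq
    simp only
    constructor
    · unfold colT hgt
      simp only
      rw [card_image_of_injOn (ent_inj hT d)]
    · unfold colT
      exact image_subset_image (filter_subset _ _)
  · rw [chain_iff]
    constructor
    · intro q _
      by_cases h : q.1.1 = ⟨0, hr⟩
      · right
        refine ⟨h.symm, fun m => ?_⟩
        simp [N]
      · left
        rw [Fin.lt_def]
        have : q.1.1.val ≠ 0 := fun h' => h (Fin.ext h')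
        simp only
        omega
    · rw [PT, List.map_map, List.pairwise_map]
      refine (pairwise_LL lam).imp ?_
      rintro ⟨i, j⟩ ⟨i', j'⟩ h
      rcases h with h | ⟨h, h'⟩
      · exact Or.inl h
      · simp only at h h'
        subst h
        exact Or.inr ⟨rfl, compat_colT hlam hT i j j' h'.le⟩

lemma N_mono (S : Finset (Fin n)) {m m' : ℕ} (h : m ≤ m') : N S m ≤ N S m' := by
  unfold N
  apply card_le_card
  intro x
  simp only [mem_filter]
  exact fun hx => ⟨hx.1, by omega⟩

lemma N_lt (S : Finset (Fin n)) {a b : Fin n} (ha : a ∈ S) (h : a < b) : N S a.val < N S b.val := by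
  have h1 := N_succ S a
  rw [if_pos ha] at h1
  have h2 := N_mono S (show a.val + 1 ≤ b.val from h)
  omega

lemma N_injOn (S : Finset (Fin n)) {a b : Fin n} (ha : a ∈ S) (hb : b ∈ S)
    (h : N S a.val = N S b.val) : a = b := by
  rcases lt_trichotomy a b with h' | h' | h'
  · have := N_lt S ha h'; omega
  · exact h'
  · have := N_lt S hb h'; omega

lemma N_lt_card (S : Finset (Fin n)) {a : Fin n} (ha : a ∈ S) : N S a.val < S.card := by
  have h1 := N_succ S a
  rw [if_pos ha] at h1
  have : N S (a.val + 1) ≤ S.card := card_filter_le _ _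
  omega

lemma exists_rank (S : Finset (Fin n)) (k : ℕ) (hk : k < S.card) : ∃ a ∈ S, N S a.val = k := by
  have : S.image (fun a => N S a.val) = range S.card := by
    apply eq_of_subset_of_card_le
    · intro x hx
      rw [mem_image] at hx
      obtain ⟨a, ha, rfl⟩ := hx
      exact mem_range.2 (N_lt_card S ha)
    · rw [card_range, card_image_of_injOn]
      intro a ha b hb h
      exact N_injOn S ha hb h
  have hk' : k ∈ S.image (fun a => N S a.val) := by rw [this]; exact mem_range.2 hk
  simpa using hk'

lemma PT_inj (hlam : ∀ i, IsPartition (lam i)) {T T' : (i : Fin r) → cells (lam i) → Fin n × Bool}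
    (hT : IsBarredSkew lam T) (hT' : IsBarredSkew lam T') (h : PT lam T = PT lam T') : T = T' := by
  have h1 : ∀ d ∈ LL lam, colT lam T d = colT lam T' d := by
    intro d hd
    have := (List.map_inj_left.1 h) d hd
    simpa using this
  funext i c
  rw [ent_eq lam T, ent_eq lam T']
  set d : Fin r × ℕ := (i, c.1.2)
  have hR := row_mem lam i c
  set R := c.1.1
  have hc := h1 d (mem_LL_of_rows lam d R hR)
  have e1 : (ent lam T d R).1 = (ent lam T' d R).1 := by
    apply N_injOn (colT lam T d).1
    · exact mem_image_of_mem (fun R => (ent lam T d R).1) hR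
    · rw [hc]; exact mem_image_of_mem (fun R => (ent lam T' d R).1) hR
    · rw [N_ent hlam hT d R hR, hc, N_ent hlam hT' d R hR]
  have e2 := unbarred_iff hT d R hR
  rw [e1, hc, unbarred_iff hT' d R hR] at e2
  refine Prod.ext e1 ?_
  cases h3 : (ent lam T d R).2 <;> cases h4 : (ent lam T' d R).2 <;> simp_all

lemma exists_fun {α β : Type*} [DecidableEq α] [Inhabited β] (P : List (α × β)) (h : (P.map Prod.fst).Nodup) :
    ∃ f : α → β, P = (P.map Prod.fst).map (fun d => (d, f d)) := by
  induction P with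
  | nil => exact ⟨fun _ => default, rfl⟩
  | cons q P ih =>
    rw [List.map_cons, List.nodup_cons] at h
    obtain ⟨f, hf⟩ := ih h.2
    refine ⟨Function.update f q.1 q.2, ?_⟩
    rw [List.map_cons, List.map_cons]
    congr 1
    · simp
    · conv_lhs => rw [hf]
      apply List.map_congr_left
      intro d hd
      rw [Function.update_of_ne]
      rintro rfl
      exact h.1 hd

lemma PT_surj (hlam : ∀ i, IsPartition (lam i)) (p : (Fin r × ℕ) × Finset (Fin n))
    (P : List ((Fin r × ℕ) × Finset (Fin n) × Finset (Fin n)))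
    (hP : P ∈ paths (hgt lam) (LL lam) p) :
    ∃ T : (i : Fin r) → cells (lam i) → Fin n × Bool, IsBarredSkew lam T ∧ PT lam T = P := by
  rw [mem_paths] at hP
  obtain ⟨hP1, hP2, hP3⟩ := hP
  obtain ⟨f, hf⟩ := exists_fun P (by rw [hP1]; exact nodup_LL lam)
  rw [hP1] at hf
  have hc : ∀ d ∈ LL lam, (f d).1.card = hgt lam d ∧ (f d).2 ⊆ (f d).1 := by
    intro d hd
    exact hP2 (d, f d) (by rw [hf]; exact List.mem_map_of_mem hd)
  have hcomp : ∀ i j j', (i, j) ∈ LL lam → (i, j') ∈ LL lam → j < j' →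
      Compat (f (i, j')).1 (f (i, j)).1 := by
    intro i j j' h1 h2 hj
    rw [chain_iff, hf, List.map_map, List.pairwise_map] at hP3
    have hpw := (hP3.2.and (pairwise_LL lam))
    have hpw' := hpw.imp (S := fun d d' => (Rel d d' (f d).1 (f d').1 ∧ Ord d d') ∨
      (Rel d' d (f d').1 (f d).1 ∧ Ord d' d)) (fun h => Or.inl h)
    have hsy : Std.Symm (fun d d' => (Rel d d' (f d).1 (f d').1 ∧ Ord d d') ∨
      (Rel d' d (f d').1 (f d).1 ∧ Ord d' d)) := ⟨fun _ _ h => Or.symm h⟩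
    have := hpw'.forall h2 h1 (by simp; omega)
    rcases this with ⟨h3, h4⟩ | ⟨h3, h4⟩
    · rcases h3 with h3 | h3
      · exact absurd h3 (lt_irrefl _)
      · exact h3.2
    · rcases h4 with h4 | h4
      · exact absurd h4 (lt_irrefl _)
      · have := h4.2; simp only at this; omega
  have hex : ∀ d R, ∃ a : Fin n, R ∈ rows lam d → a ∈ (f d).1 ∧ N (f d).1 a.val = R.val := by
    intro d R
    by_cases hR : R ∈ rows lam d
    · have hd := mem_LL_of_rows lam d R hR
      rw [mem_rows_lt lam hlam, ← (hc d hd).1] at hR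
      obtain ⟨a, ha⟩ := exists_rank _ _ hR
      exact ⟨a, fun _ => ha⟩
    · exact ⟨R, fun h => absurd h hR⟩
  choose g hg using hex
  set T : (i : Fin r) → cells (lam i) → Fin n × Bool := fun i c =>
    (g (i, c.1.2) c.1.1, decide (g (i, c.1.2) c.1.1 ∉ (f (i, c.1.2)).2)) with hTdef
  have hent : ∀ d R, R ∈ rows lam d → ent lam T d R = (g d R, decide (g d R ∉ (f d).2)) := by
    intro d R hR
    simp only [rows, mem_filter, mem_univ, true_and, ← mem_cells] at hR
    unfold ent
    rw [dif_pos hR]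
  have hT : IsBarredSkew lam T := by
    rw [barred_iff]
    constructor
    · intro i j j' R hj h1 h2
      rcases eq_or_lt_of_le hj with rfl | hj
      · exact le_rfl
      rw [hent _ _ h1, hent _ _ h2]
      simp only
      have hC := hcomp i j j' (mem_LL_of_rows lam _ R h1) (mem_LL_of_rows lam _ R h2) hj
      obtain ⟨a1, a2⟩ := hg _ _ h1
      obtain ⟨b1, b2⟩ := hg _ _ h2
      by_contra hlt
      rw [not_le] at hlt
      have e1 := hC ((g (i, j') R).val + 1)
      rw [N_succ, if_pos b1, b2] at e1
      have e2 := N_mono (f (i, j)).1 (show (g (i, j') R).val + 1 ≤ (g (i, j) R).val from hlt)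
      omega
    · intro d R R' h1 h2 hlt
      rw [hent _ _ h1, hent _ _ h2]
      simp only
      obtain ⟨a1, a2⟩ := hg _ _ h1
      obtain ⟨b1, b2⟩ := hg _ _ h2
      by_contra hle
      rw [not_lt] at hle
      have := N_mono (f d).1 (show (g d R').val ≤ (g d R).val from hle)
      rw [a2, b2] at this
      have hlt' : R.val < R'.val := hlt
      omega
  refine ⟨T, hT, ?_⟩
  rw [hf, PT]
  apply List.map_congr_left
  intro d hd
  congr 1
  have hback : ∀ a ∈ (f d).1, ∃ R ∈ rows lam d, g d R = a := by
    intro a ha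
    have h1 := N_lt_card _ ha
    have h2 : hgt lam d ≤ n := by
      have := card_le_univ (rows lam d)
      rwa [Fintype.card_fin] at this
    have h3 := (hc d hd).1
    have hR : (⟨N (f d).1 a.val, by omega⟩ : Fin n) ∈ rows lam d := by
      rw [mem_rows_lt lam hlam]; simp only; omega
    refine ⟨_, hR, ?_⟩
    obtain ⟨a1, a2⟩ := hg _ _ hR
    exact N_injOn _ a1 ha a2
  refine Prod.ext ?_ ?_
  · ext a
    simp only [colT, mem_image]
    constructor
    · rintro ⟨R, hR, rfl⟩
      rw [hent _ _ hR]
      exact (hg _ _ hR).1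
    · intro ha
      obtain ⟨R, hR, rfl⟩ := hback a ha
      exact ⟨R, hR, by rw [hent _ _ hR]⟩
  · ext a
    simp only [colT, mem_image, mem_filter]
    constructor
    · rintro ⟨R, ⟨hR, hb⟩, rfl⟩
      rw [hent _ _ hR] at hb ⊢
      simpa using hb
    · intro ha
      obtain ⟨R, hR, rfl⟩ := hback a ((hc d hd).2 ha)
      refine ⟨R, ⟨hR, ?_⟩, by rw [hent _ _ hR]⟩
      rw [hent _ _ hR]
      simpa using ha

end Bar

end BG

namespace BG

lemma sorted_ext (l l' : List ℕ) (h : l.Pairwise (· < ·)) (h' : l'.Pairwise (· < ·))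
    (hm : ∀ a, a ∈ l ↔ a ∈ l') : l = l' := by
  have hp : l.Perm l' := (List.perm_ext_iff_of_nodup (h.imp (fun h => ne_of_lt h))
    (h'.imp (fun h => ne_of_lt h))).2 hm
  exact hp.eq_of_pairwise (fun a b _ _ h1 h2 => absurd h1 (lt_asymm h2)) h h'

lemma word_eq {n r : ℕ} {lam : Fin r → Fin n → ℕ}
    {T : (i : Fin r) → cells (lam i) → Fin n × Bool} (hT : IsBarredSkew lam T) :
    colWord lam T = (wordP (PT lam T)).map Fin.val := by
  unfold colWord wordP PT LL colWord1
  simp only [List.map_flatMap, List.flatMap_map, List.flatMap_assoc]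
  congr 1
  funext i
  congr 1
  funext j
  have hcell : ∀ R, (R, j) ∈ cells (lam i) ↔ R ∈ rows lam (i, j) := by
    intro R; simp [rows, mem_cells]
  have hfun : ∀ R, (if h : (R, j) ∈ cells (lam i) then
        (if (T i ⟨(R, j), h⟩).2 = false then some ((T i ⟨(R, j), h⟩).1 : ℕ) else none)
      else none) = if R ∈ rows lam (i, j) ∧ (ent lam T (i, j) R).2 = false then
        some ((ent lam T (i, j) R).1 : ℕ) else none := by
    intro R
    by_cases h : (R, j) ∈ cells (lam i)
    · have h' := (hcell R).1 h
      rw [dif_pos h]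
      simp only [ent, h, h', dif_pos, true_and]
    · have h' := fun h2 => h ((hcell R).2 h2)
      rw [dif_neg h, if_neg (fun h2 => h' h2.1)]
  simp only [hfun]
  apply sorted_ext
  · rw [List.pairwise_filterMap]
    refine (List.pairwise_lt_finRange n).imp ?_
    intro R R' hlt a ha b hb
    split_ifs at ha hb with h1 h2
    simp only [Option.some.injEq] at ha hb
    subst ha hb
    exact (ent_lt_iff hT (i, j) R R' h1.1 h2.1).2 hlt
  · rw [List.pairwise_map]
    exact (sorted_wd _).imp (fun h => h)
  · intro a
    simp only [List.mem_filterMap, List.mem_finRange, true_and, List.mem_map, mem_wd]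
    constructor
    · rintro ⟨R, hR⟩
      split_ifs at hR with h1
      simp only [Option.some.injEq] at hR
      exact ⟨_, (unbarred_iff hT (i, j) R h1.1).2 h1.2, hR⟩
    · rintro ⟨b, hb, rfl⟩
      simp only [colT, mem_image, mem_filter] at hb
      obtain ⟨R, hR, rfl⟩ := hb
      exact ⟨R, by rw [if_pos hR]⟩

/-- weight of a single entry -/
noncomputable def ew {n r : ℕ} (d : Fin r × ℕ) (R : Fin n) (e : Fin n × Bool) : Rg n r :=
  if e.2 = true then X (Sum.inr (d.1, ysub e.1 (R, d.2))) else xv e.1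

lemma wt_eq {n r : ℕ} {lam : Fin r → Fin n → ℕ} (hlam : ∀ i, IsPartition (lam i))
    {T : (i : Fin r) → cells (lam i) → Fin n × Bool} (hT : IsBarredSkew lam T) (d : Fin r × ℕ) :
    (wt (d, colT lam T d) : Rg n r) = ∏ R ∈ rows lam d, ew d R (ent lam T d R) := by
  have hinj := ent_inj hT d
  have hdiff : (colT lam T d).1 \ (colT lam T d).2 =
      ((rows lam d).filter (fun R => (ent lam T d R).2 = true)).image
        (fun R => (ent lam T d R).1) := by
    ext a
    simp only [mem_sdiff, mem_image, mem_filter]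
    constructor
    · rintro ⟨h1, h2⟩
      have h1' := h1
      simp only [colT, mem_image] at h1'
      obtain ⟨R, hR, rfl⟩ := h1'
      rw [unbarred_iff hT d R hR] at h2
      exact ⟨R, ⟨hR, by simpa using h2⟩, rfl⟩
    · rintro ⟨R, ⟨hR, hb⟩, rfl⟩
      rw [unbarred_iff hT d R hR, hb]
      exact ⟨mem_image_of_mem (fun R => (ent lam T d R).1) hR, by simp⟩
  unfold wt yw
  simp only
  rw [hdiff, prod_image (hinj.mono (by intro x; simp; tauto))]
  have e2 : ∏ a ∈ (colT lam T d).2, (xv a : Rg n r) =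
      ∏ R ∈ (rows lam d).filter (fun R => ¬ (ent lam T d R).2 = true), xv (ent lam T d R).1 := by
    unfold colT
    simp only
    rw [prod_image (hinj.mono (by intro x; simp; tauto))]
    simp
  rw [e2, mul_comm, ← prod_filter_mul_prod_filter_not (rows lam d) (fun R => (ent lam T d R).2 = true)
    (fun R => ew d R (ent lam T d R))]
  congr 1
  · refine prod_congr rfl fun R hR => ?_
    rw [mem_filter] at hR
    rw [ew, if_pos hR.2, yv, N_ent hlam hT d R hR.1]
    rfl
  · refine prod_congr rfl fun R hR => ?_
    rw [mem_filter] at hR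
    rw [ew, if_neg hR.2]

lemma prod_cells {n r : ℕ} (lam : Fin r → Fin n → ℕ) (i : Fin r) (G : ℕ → Fin n → Rg n r) :
    ∏ c : cells (lam i), G c.1.2 c.1.1 =
      ∏ j ∈ range (univ.sup (lam i)), ∏ R ∈ rows lam (i, j), G j R := by
  rw [Finset.prod_coe_sort (cells (lam i)) (fun c => G c.2 c.1)]
  unfold cells
  rw [prod_filter, prod_product_right]
  refine prod_congr rfl fun j _ => ?_
  rw [rows, prod_filter]

lemma prod_flatMap' {α : Type*} {M : Type*} [CommMonoid M] (l : List α) (f : α → List M) :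
    (l.flatMap f).prod = (l.map fun a => (f a).prod).prod := by
  induction l with
  | nil => simp
  | cons a l ih => simp [List.flatMap_cons, ih]

lemma prod_range_rev {M : Type*} [CommMonoid M] (m : ℕ) (f : ℕ → M) :
    ((List.range m).reverse.map f).prod = ∏ j ∈ range m, f j := by
  induction m with
  | zero => simp
  | succ m ih =>
    rw [List.range_succ, List.reverse_append, prod_range_succ, ← ih, mul_comm]
    simp

lemma prod_PT {n r : ℕ} {lam : Fin r → Fin n → ℕ} (hlam : ∀ i, IsPartition (lam i))
    {T : (i : Fin r) → cells (lam i) → Fin n × Bool} (hT : IsBarredSkew lam T) :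
    (((PT lam T).map wt).prod : Rg n r) =
      ∏ i, ∏ c : cells (lam i), ew (i, c.1.2) c.1.1 (T i c) := by
  have h1 : ∀ i, ∏ c : cells (lam i), (ew (i, c.1.2) c.1.1 (T i c) : Rg n r) =
      ∏ j ∈ range (univ.sup (lam i)), wt ((i, j), colT lam T (i, j)) := by
    intro i
    simp only [wt_eq hlam hT]
    rw [← prod_cells lam i (fun j R => ew (i, j) R (ent lam T (i, j) R))]
    refine prod_congr rfl fun c _ => ?_
    rw [ent_eq lam T]
  simp only [h1]
  unfold PT LL
  rw [List.map_map, List.map_flatMap, prod_flatMap', ← Fin.prod_univ_def]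
  refine prod_congr rfl fun i _ => ?_
  rw [List.map_map, prod_range_rev]
  rfl

lemma prod_ew {n r : ℕ} (lam : Fin r → Fin n → ℕ) (i : Fin r)
    (T : cells (lam i) → Fin n × Bool) :
    (∏ c : cells (lam i), ew (i, c.1.2) c.1.1 (T c) : Rg n r) =
      rename Sum.inr (cT1 r i (lam i) T) * ∏ k, xv k ^ content1 (lam i) T k := by
  rw [← prod_filter_mul_prod_filter_not univ (fun c : cells (lam i) => (T c).2 = true)]
  congr 1
  · unfold cT1
    rw [map_prod]
    refine prod_congr rfl fun c hc => ?_
    rw [ew, if_pos (mem_filter.1 hc).2, rename_X]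
  · rw [← prod_fiberwise_of_maps_to (t := (univ : Finset (Fin n)))
      (g := fun c => (T c).1) (fun _ _ => mem_univ _)]
    refine prod_congr rfl fun k _ => ?_
    unfold content1
    rw [← prod_const, filter_filter]
    have e : (univ.filter fun c : cells (lam i) => ¬ (T c).2 = true ∧ (T c).1 = k) =
        univ.filter fun c : cells (lam i) => T c = (k, false) := by
      ext c
      simp [Prod.ext_iff, and_comm]
    rw [e]
    refine prod_congr rfl fun c hc => ?_
    have := (mem_filter.1 hc).2
    simp [ew, this]

lemma A_avand {n r : ℕ} (e : Fin n → ℕ) : A (∏ k, xv k ^ e k : Rg n r) = avand n r e := by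
  unfold A avand
  rw [Matrix.det_apply]
  refine sum_congr rfl fun σ _ => ?_
  rw [map_prod, Units.smul_def]
  congr 1
  refine prod_congr rfl fun k _ => ?_
  rw [map_pow, act_xv]
  rfl

lemma value {n r : ℕ} {lam : Fin r → Fin n → ℕ} (hlam : ∀ i, IsPartition (lam i))
    {T : (i : Fin r) → cells (lam i) → Fin n × Bool} (hT : IsBarredSkew lam T) :
    rename Sum.inr (cT lam T) * avand n r (fun k => rhoPart n k + contentT lam T k) =
      A (mono [] * ((PT lam T).map wt).prod) := by
  have e : (mono [] * ((PT lam T).map wt).prod : Rg n r) = rename Sum.inr (cT lam T) *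
      ∏ k, xv k ^ (rhoPart n k + contentT lam T k) := by
    rw [prod_PT hlam hT]
    simp only [prod_ew, prod_mul_distrib, pow_add, mono, cT, contentT, map_prod,
      List.count_nil, pow_zero, mul_one]
    rw [prod_comm]
    simp only [prod_pow_eq_pow_sum]
    ring
  rw [e, A_mul, A_avand]
  intro σ
  unfold act
  rw [rename_rename]
  rfl

lemma main {n r : ℕ} (hr : 0 < r) (lam : Fin r → Fin n → ℕ) (hlam : ∀ i, IsPartition (lam i)) :
    ∑ T ∈ Finset.univ.filter
        (fun T : (i : Fin r) → cells (lam i) → Fin n × Bool =>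
          IsBarredSkew lam T ∧ ¬ IsYam (colWord lam T)),
      rename Sum.inr (cT lam T) * avand n r (fun k => rhoPart n k + contentT lam T k)
      = 0 := by
  have h := bad_sum (n := n) (hgt lam) (LL lam) ((⟨0, hr⟩, univ.sup (lam ⟨0, hr⟩)), ∅) []
    (chain_LL hr lam) (by intro t k; simp)
  rw [A_sum] at h
  rw [← h]
  have e0 : A (0 : Rg n r) = 0 := by simp [A]
  have h2 : ∀ P : List ((Fin r × ℕ) × Finset (Fin n) × Finset (Fin n)),
      A (if IsYam (([] ++ wordP P).map Fin.val) then (0 : Rg n r) else mono [] * (P.map wt).prod) =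
      if ¬ IsYam ((wordP P).map Fin.val) then A (mono [] * (P.map wt).prod) else 0 := by
    intro P
    rw [List.nil_append]
    by_cases hY : IsYam ((wordP P).map Fin.val)
    · rw [if_pos hY, if_neg (not_not.2 hY), e0]
    · rw [if_neg hY, if_pos hY]
  simp only [h2]
  rw [← sum_filter]
  refine sum_bij (fun T _ => PT lam T) ?_ ?_ ?_ ?_
  · intro T hT
    obtain ⟨-, hT, hY⟩ := mem_filter.1 hT
    rw [word_eq hT] at hY
    exact mem_filter.2 ⟨PT_mem hlam hT hr _, hY⟩
  · intro T hT T' hT' hh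
    exact PT_inj hlam (mem_filter.1 hT).2.1 (mem_filter.1 hT').2.1 hh
  · intro P hP
    obtain ⟨hP, hY⟩ := mem_filter.1 hP
    obtain ⟨T, hT, rfl⟩ := PT_surj hlam _ P hP
    rw [← word_eq hT] at hY
    exact ⟨T, mem_filter.2 ⟨mem_univ _, hT, hY⟩, rfl⟩
  · intro T hT
    exact value hlam (mem_filter.1 hT).2.1

end BG

/-- Lemma 3.2: the terms coming from barred skew tableaux whose
unbarred column word is not Yamanouchi cancel out. -/
theorem bad_guys_vanish (n r : ℕ) (hn : 1 ≤ n) (hr : 1 ≤ r)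
    (lam : Fin r → Fin n → ℕ) (hlam : ∀ i, IsPartition (lam i)) :
    ∑ T ∈ Finset.univ.filter
        (fun T : (i : Fin r) → cells (lam i) → Fin n × Bool =>
          IsBarredSkew lam T ∧ ¬ IsYam (colWord lam T)),
      rename Sum.inr (cT lam T) * avand n r (fun k => rhoPart n k + contentT lam T k)
      = 0 := by
  exact BG.main hr lam hlam
end
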